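/- arXiv:2211.01916 — 3 statements merged into one kernel-verified Lean document; each statement's English description precedes it below -/
import Mathlib

section
/- There is a universal constant K > 0 such that the following holds. Suppose the early-stopping discretization points δ = t₀ < t₁ < ⋯ < t_N = T with δ > 0 satisfy G_k/σ_{t_{k−1}}² ≤ 1/(K·d) for every k = 1,…,N. Then Σ_{k=1}^N ∫_{t_{k−1}}^{t_k} g(t)²·E‖∇log p_t(x_t) − ∇log p_{t_k}(x_{t_k})‖² dt ≤ K·d²·Σ_{k=1}^N G_k²/σ_{t_{k−1}}⁴, where the expectations are over the joint forward coupling of (x_t, x_{t_k}). -/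
open MeasureTheory Real

noncomputable section

namespace DiffusionKL

/-- Euclidean space `ℝ^d`. -/
abbrev Vec (d : ℕ) := EuclideanSpace ℝ (Fin d)

/-- Density of the isotropic Gaussian `N(m, v·I_d)` on `ℝ^d`. -/
def gaussDensity (d : ℕ) (m : Vec d) (v : ℝ) (x : Vec d) : ℝ :=
  (2 * π * v) ^ (-(d : ℝ) / 2) * Real.exp (-‖x - m‖ ^ 2 / (2 * v))

/-- The isotropic Gaussian measure `N(m, v·I_d)` on `ℝ^d`. -/
def gaussMeasure (d : ℕ) (m : Vec d) (v : ℝ) : Measure (Vec d) :=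
  MeasureTheory.volume.withDensity (fun x => ENNReal.ofReal (gaussDensity d m v x))

/-- The standard Gaussian measure `γ_d = N(0, I_d)` on `ℝ^d`. -/
def stdGauss (d : ℕ) : Measure (Vec d) := gaussMeasure d 0 1

/-- Kullback-Leibler divergence `KL(μ ‖ ν) = ∫ log (dμ/dν) dμ`. -/
def KLdiv {d : ℕ} (μ ν : Measure (Vec d)) : ℝ :=
  ∫ x, Real.log ((μ.rnDeriv ν x).toReal) ∂μ

/-- `G_{t,s} = ∫_t^s g(u)² du`. -/
def Gvar (g : ℝ → ℝ) (t s : ℝ) : ℝ := ∫ u in t..s, (g u) ^ 2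

/-- `α_{t,s} = exp(−G_{t,s}/2)`. -/
def alphaF (g : ℝ → ℝ) (t s : ℝ) : ℝ := Real.exp (-(Gvar g t s) / 2)

/-- `σ_t² = 1 − exp(−G_t)`. -/
def sigmaSq (g : ℝ → ℝ) (t : ℝ) : ℝ := 1 - Real.exp (-(Gvar g 0 t))

/-- The law of the forward marginal `x_t = α_t X₀ + σ_t Z`, `X₀ ∼ P`, `Z ∼ N(0,I_d)` indep. -/
def forwardLaw (d : ℕ) (P : Measure (Vec d)) (g : ℝ → ℝ) (t : ℝ) : Measure (Vec d) :=
  Measure.map (fun q : Vec d × Vec d => alphaF g 0 t • q.1 + Real.sqrt (sigmaSq g t) • q.2)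
    (P.prod (stdGauss d))

/-- Explicit density of the forward marginal `p_t` (for `t > 0`). -/
def forwardDensity (d : ℕ) (P : Measure (Vec d)) (g : ℝ → ℝ) (t : ℝ) (x : Vec d) : ℝ :=
  (2 * π * sigmaSq g t) ^ (-(d : ℝ) / 2) *
    ∫ y, Real.exp (-‖x - alphaF g 0 t • y‖ ^ 2 / (2 * sigmaSq g t)) ∂P

/-- Score function `∇ log p` of a density `p`. -/
def scoreOf {d : ℕ} (p : Vec d → ℝ) (x : Vec d) : Vec d :=
  gradient (fun z => Real.log (p z)) x

/-- Score `∇ log p_t` of the forward marginal at time `t > 0`. -/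
def fwdScore (d : ℕ) (P : Measure (Vec d)) (g : ℝ → ℝ) (t : ℝ) : Vec d → Vec d :=
  scoreOf (forwardDensity d P g t)

/-- Underlying measure for the joint forward coupling: `ω = (X₀, Z, Z')`. -/
def coupleMeasure (d : ℕ) (P : Measure (Vec d)) : Measure (Vec d × Vec d × Vec d) :=
  P.prod ((stdGauss d).prod (stdGauss d))

/-- The forward process at time `t`: `x_t(ω) = α_t X₀ + σ_t Z`. -/
def xt (d : ℕ) (g : ℝ → ℝ) (t : ℝ) (ω : Vec d × Vec d × Vec d) : Vec d :=
  alphaF g 0 t • ω.1 + Real.sqrt (sigmaSq g t) • ω.2.1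

/-- The forward process at time `s ≥ t`, coupled with `x_t` by
`x_s = α_{t,s} x_t + √(1−α_{t,s}²) Z'`. -/
def xts (d : ℕ) (g : ℝ → ℝ) (t s : ℝ) (ω : Vec d × Vec d × Vec d) : Vec d :=
  alphaF g t s • xt d g t ω + Real.sqrt (1 - (alphaF g t s) ^ 2) • ω.2.2

/-- Law of a Markov chain after `n` steps, started at `init`, with transition kernels `κ`. -/
def chainLaw (d : ℕ) (init : Measure (Vec d)) (κ : ℕ → Vec d → Measure (Vec d)) :
    ℕ → Measure (Vec d)
  | 0 => init
  | k + 1 => (chainLaw d init κ k).bind (κ k)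

/-- One step of the exponential-integrator sampler:
`ŷ_{k+1} | ŷ_k = a ∼ N(e^{G_{N−k}/2}·a + 2(e^{G_{N−k}/2} − 1)·s(a,t_{N−k}), (e^{G_{N−k}} − 1)·I_d)`. -/
def EIstep (d N : ℕ) (tp : ℕ → ℝ) (g : ℝ → ℝ) (sc : Vec d → ℝ → Vec d) (k : ℕ) (a : Vec d) :
    Measure (Vec d) :=
  gaussMeasure d
    (Real.exp (Gvar g (tp (N - k - 1)) (tp (N - k)) / 2) • a +
      (2 * (Real.exp (Gvar g (tp (N - k - 1)) (tp (N - k)) / 2) - 1)) • sc a (tp (N - k)))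
    (Real.exp (Gvar g (tp (N - k - 1)) (tp (N - k))) - 1)

/-- One step of the Euler–Maruyama sampler:
`ŷ_{k+1} | ŷ_k = a ∼ N((1 + G_{N−k}/2)·a + G_{N−k}·s(a,t_{N−k}), G_{N−k}·I_d)`. -/
def EMstep (d N : ℕ) (tp : ℕ → ℝ) (g : ℝ → ℝ) (sc : Vec d → ℝ → Vec d) (k : ℕ) (a : Vec d) :
    Measure (Vec d) :=
  gaussMeasure d
    ((1 + Gvar g (tp (N - k - 1)) (tp (N - k)) / 2) • a +
      (Gvar g (tp (N - k - 1)) (tp (N - k))) • sc a (tp (N - k)))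
    (Gvar g (tp (N - k - 1)) (tp (N - k)))

/-- Terminal law of the exponential-integrator sampler started at `N(0,I_d)`. -/
def EIlaw (d N : ℕ) (tp : ℕ → ℝ) (g : ℝ → ℝ) (sc : Vec d → ℝ → Vec d) : Measure (Vec d) :=
  chainLaw d (stdGauss d) (EIstep d N tp g sc) N

/-- Terminal law of the Euler–Maruyama sampler started at `N(0,I_d)`. -/
def EMlaw (d N : ℕ) (tp : ℕ → ℝ) (g : ℝ → ℝ) (sc : Vec d → ℝ → Vec d) : Measure (Vec d) :=
  chainLaw d (stdGauss d) (EMstep d N tp g sc) N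

/-- The weighted L² score estimation error
`(1/G_T)·Σ_{k=1}^N G_k·E_{p_{t_k}} ‖∇log p_{t_k}(x) − s(x,t_k)‖²`. -/
def scoreErr (d N : ℕ) (P : Measure (Vec d)) (g : ℝ → ℝ) (tp : ℕ → ℝ)
    (sc : Vec d → ℝ → Vec d) : ℝ :=
  (1 / Gvar g 0 (tp N)) * ∑ k ∈ Finset.range N,
    Gvar g (tp k) (tp (k + 1)) *
      ∫ x, ‖fwdScore d P g (tp (k + 1)) x - sc x (tp (k + 1))‖ ^ 2
        ∂(forwardLaw d P g (tp (k + 1)))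

/-- Entry `(i,j)` of the Hessian matrix `∇²f(x)`. -/
def hessEntry {d : ℕ} (f : Vec d → ℝ) (x : Vec d) (i j : Fin d) : ℝ :=
  fderiv ℝ (fun y => fderiv ℝ f y (EuclideanSpace.single j 1)) x (EuclideanSpace.single i 1)

/-- Frobenius norm of the Hessian matrix `∇²f(x)`. -/
def hessFrob {d : ℕ} (f : Vec d → ℝ) (x : Vec d) : ℝ :=
  Real.sqrt (∑ i, ∑ j, (hessEntry f x i j) ^ 2)

/-- Density of the Gaussian perturbation `X + σZ`, `X ∼ P`, `Z ∼ N(0,I_d)`. -/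
def perturbDensity (d : ℕ) (P : Measure (Vec d)) (σ : ℝ) (x : Vec d) : ℝ :=
  (2 * π * σ ^ 2) ^ (-(d : ℝ) / 2) * ∫ y, Real.exp (-‖x - y‖ ^ 2 / (2 * σ ^ 2)) ∂P

/-- Density of `μY + σZ`, `Y ∼ P`, `Z ∼ N(0,I_d)`. -/
def perturbDensity' (d : ℕ) (P : Measure (Vec d)) (μ σ : ℝ) (x : Vec d) : ℝ :=
  (2 * π * σ ^ 2) ^ (-(d : ℝ) / 2) * ∫ y, Real.exp (-‖x - μ • y‖ ^ 2 / (2 * σ ^ 2)) ∂P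

/-- Law of the Gaussian perturbation `X + σZ`. -/
def perturbLaw (d : ℕ) (P : Measure (Vec d)) (σ : ℝ) : Measure (Vec d) :=
  Measure.map (fun q : Vec d × Vec d => q.1 + σ • q.2)
    (P.prod (MeasureTheory.volume.withDensity
      (fun x : Vec d => ENNReal.ofReal ((2 * π) ^ (-(d : ℝ) / 2) * Real.exp (-‖x‖ ^ 2 / 2)))))

/-- The tilted conditional measure `dP̃_{μ,σ}(y|x) ∝ exp(−‖x−μy‖²/(2σ²)) dP(y)`. -/
def tiltMeasure (d : ℕ) (P : Measure (Vec d)) (μ σ : ℝ) (x : Vec d) : Measure (Vec d) :=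
  ((P.withDensity (fun y => ENNReal.ofReal (Real.exp (-‖x - μ • y‖ ^ 2 / (2 * σ ^ 2))))) Set.univ)⁻¹ •
    P.withDensity (fun y => ENNReal.ofReal (Real.exp (-‖x - μ • y‖ ^ 2 / (2 * σ ^ 2))))

/-- Sub-exponential (ψ₁-Orlicz) norm of `f` under the measure `μ`. -/
def psi1Norm {α : Type*} [MeasurableSpace α] (μ : Measure α) (f : α → ℝ) : ℝ :=
  sInf {t : ℝ | 0 < t ∧ ∫ x, Real.exp (|f x| / t) ∂μ ≤ 2}

/-- Sub-Gaussian (ψ₂-Orlicz) norm of `f` under the measure `μ`. -/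
def psi2Norm {α : Type*} [MeasurableSpace α] (μ : Measure α) (f : α → ℝ) : ℝ :=
  sInf {t : ℝ | 0 < t ∧ ∫ x, Real.exp ((f x) ^ 2 / t ^ 2) ∂μ ≤ 2}

/-!
Write `S_v` for the score of `Y + √v Z` and `J(v) = E‖S_v(Y + √v Z)‖²` for its Fisher information.
By Tweedie's formula `S_v` is the conditional expectation of `-Z / √v` given `Y + √v Z`, so
`v ↦ S_v` is a backward martingale along the noisy observations of `Y`. Increments of a martingale
are orthogonal, and hence `E‖S_v - c S_w‖² = J(v) - J(w) + (1 - c)² J(w)` for `v < w`; up to a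
deterministic dilation, the forward process between two times is exactly such an addition of
independent noise.

The decay `J(v) - J(v(1 + r)) ≲ d² r / v` needs no regularity of `Y`: in the variational formula
`J(v(1 + r)) = sup_f E[2⟨f, -Z / √(v(1 + r))⟩ - ‖f‖²]` take `f = S_v`. The dilated
noise `√(1 + r) Z` is again Gaussian, with an explicit density with respect to `Z` that is within
`O(√d r)` of `1` in `L²`; so `f` is tested against a small reweighting of the pair `(Y, Z)`, and the
fourth moments of `S_v` and `Z` control the error.
-/

open ProbabilityTheory Module

lemma integral_withDensity_ofReal {α F : Type*} [MeasurableSpace α] [NormedAddCommGroup F]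
    [NormedSpace ℝ F] {μ : Measure α} {ρ : α → ℝ} (hρ : Measurable ρ) (hρ0 : ∀ x, 0 ≤ ρ x)
    (f : α → F) :
    ∫ x, f x ∂(μ.withDensity fun x => ENNReal.ofReal (ρ x)) = ∫ x, ρ x • f x ∂μ := by
  rw [integral_withDensity_eq_integral_toReal_smul (by fun_prop) (by simp)]
  simp only [ENNReal.toReal_ofReal (hρ0 _)]

lemma one_sub_rpow_neg_half_le {n : ℕ} {u : ℝ} (hu : 0 ≤ u) (hnu : n * u ≤ 1 / 2) :
    (1 - u) ^ (-(n : ℝ) / 2) ≤ 1 + 2 * n * u := by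
  rcases n.eq_zero_or_pos with rfl | hn
  · simp
  have hn1 : (1 : ℝ) ≤ n := by exact_mod_cast hn
  have hu1 : u ≤ 1 / 2 := by nlinarith
  have bernoulli : 1 - n * u ≤ (1 - u) ^ n := by
    simpa [sub_eq_add_neg] using one_add_mul_le_pow (a := -u) (by linarith) n
  calc (1 - u) ^ (-(n : ℝ) / 2) ≤ (1 - u) ^ (-(n : ℝ)) :=
        rpow_le_rpow_of_exponent_ge (by linarith) (by linarith) (by linarith)
    _ = ((1 - u) ^ n)⁻¹ := by rw [rpow_neg (by linarith), rpow_natCast]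
    _ ≤ (1 - n * u)⁻¹ := inv_anti₀ (by linarith) bernoulli
    _ ≤ 1 + 2 * n * u := by
        rw [inv_le_iff_one_le_mul₀ (by linarith)]
        nlinarith [mul_nonneg (Nat.cast_nonneg n) hu]

section Gaussian

variable {E : Type*} [NormedAddCommGroup E] [InnerProductSpace ℝ E]

/-- The density of the centred isotropic Gaussian of variance `v` on a finite-dimensional inner
product space. -/
def isotropicGaussianPDF (v : ℝ) (x : E) : ℝ :=
  (2 * π * v) ^ (-(finrank ℝ E : ℝ) / 2) * exp (-‖x‖ ^ 2 / (2 * v))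

lemma isotropicGaussianPDF_pos {v : ℝ} (hv : 0 < v) (x : E) : 0 < isotropicGaussianPDF v x := by
  unfold isotropicGaussianPDF; positivity

@[fun_prop]
lemma continuous_isotropicGaussianPDF (v : ℝ) : Continuous (isotropicGaussianPDF (E := E) v) := by
  unfold isotropicGaussianPDF; fun_prop

/-- The density, with respect to the standard Gaussian, of its image under dilation by
`√(1 + r)`. -/
def dilationDensity (r : ℝ) (z : E) : ℝ :=
  (1 + r) ^ (-(finrank ℝ E : ℝ) / 2) * exp (r / (2 * (1 + r)) * ‖z‖ ^ 2)

@[fun_prop]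
lemma continuous_dilationDensity (r : ℝ) : Continuous (dilationDensity (E := E) r) := by
  unfold dilationDensity; fun_prop

lemma dilationDensity_nonneg {r : ℝ} (hr : 0 ≤ r) (z : E) : 0 ≤ dilationDensity r z := by
  unfold dilationDensity; positivity

lemma dilationDensity_sq {r : ℝ} (hr : 0 ≤ r) (z : E) : dilationDensity r z ^ 2 =
    ((1 + r) ^ 2) ^ (-(finrank ℝ E : ℝ) / 2) * exp (r / (1 + r) * ‖z‖ ^ 2) := by
  rw [dilationDensity, mul_pow, ← rpow_natCast, ← rpow_mul (by positivity), mul_comm (_ / 2),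
    rpow_mul (by positivity), rpow_natCast, ← exp_nat_mul]
  congr 2
  push_cast
  field_simp

variable [FiniteDimensional ℝ E] [MeasurableSpace E] [BorelSpace E]

lemma integrable_exp_neg_mul_sq_norm {b : ℝ} (hb : 0 < b) :
    Integrable fun x : E => exp (-b * ‖x‖ ^ 2) := by
  refine not_imp_comm.1 integral_undef ?_
  rw [GaussianFourier.integral_rexp_neg_mul_sq_norm hb]
  positivity

lemma integrable_isotropicGaussianPDF {v : ℝ} (hv : 0 < v) :
    Integrable (isotropicGaussianPDF (E := E) v) := by
  refine ((integrable_exp_neg_mul_sq_norm (b := (2 * v)⁻¹) (by positivity)).const_mul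
    ((2 * π * v) ^ (-(finrank ℝ E : ℝ) / 2))).congr (.of_forall fun x => ?_)
  simp only [isotropicGaussianPDF]
  ring_nf

/-- The characteristic function of the right-hand side is a Gaussian integral. -/
lemma map_sqrt_smul_stdGaussian {v : ℝ} (hv : 0 < v) :
    (stdGaussian E).map (√v • ·) =
      volume.withDensity fun x => ENNReal.ofReal (isotropicGaussianPDF v x) := by
  have := isFiniteMeasure_withDensity_ofReal (integrable_isotropicGaussianPDF (E := E) hv).2
  refine Measure.ext_of_charFun (funext fun t => ?_)
  have integrand_eq (x : E) : isotropicGaussianPDF v x • Complex.exp (inner ℝ x t * Complex.I) =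
      ((2 * π * v : ℝ) ^ (-(finrank ℝ E : ℝ) / 2) : ℝ) *
        Complex.exp (-((2 * v)⁻¹ : ℝ) * ‖x‖ ^ 2 + Complex.I * inner ℝ t x) := by
    rw [isotropicGaussianPDF, Complex.real_smul, Complex.exp_add, real_inner_comm]
    push_cast
    rw [mul_assoc]
    ring_nf
  have normalization : ((2 * π * v : ℝ) ^ (-(finrank ℝ E : ℝ) / 2) : ℝ) *
      ((π : ℂ) / ((2 * v)⁻¹ : ℝ)) ^ (finrank ℝ E / 2 : ℂ) = 1 := by
    rw [show (π : ℂ) / ((2 * v)⁻¹ : ℝ) = (2 * π * v : ℝ) by push_cast; field_simp,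
      show (finrank ℝ E / 2 : ℂ) = ((finrank ℝ E / 2 : ℝ) : ℂ) by push_cast; rfl,
      ← Complex.ofReal_cpow (by positivity), ← Complex.ofReal_mul, ← rpow_add (by positivity),
      neg_div, neg_add_cancel, rpow_zero, Complex.ofReal_one]
  rw [charFun_map_smul, charFun_stdGaussian, charFun_apply,
    integral_withDensity_ofReal (by fun_prop) fun x => (isotropicGaussianPDF_pos hv x).le]
  simp_rw [integrand_eq]
  rw [integral_const_mul, GaussianFourier.integral_cexp_neg_mul_sq_norm_add
    (by rw [Complex.ofReal_re]; positivity), ← mul_assoc, normalization, one_mul, norm_smul,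
    norm_of_nonneg (sqrt_nonneg v), Complex.I_sq]
  congr 1
  have hv' : (v : ℂ) ≠ 0 := by exact_mod_cast hv.ne'
  rw [← Complex.ofReal_pow (√v * ‖t‖), mul_pow, sq_sqrt hv.le]
  push_cast
  field_simp
  ring

lemma stdGaussian_eq_withDensity :
    stdGaussian E = volume.withDensity fun x => ENNReal.ofReal (isotropicGaussianPDF 1 x) := by
  simpa using map_sqrt_smul_stdGaussian (E := E) one_pos

lemma integral_exp_mul_sq_norm_stdGaussian {l : ℝ} (hl : l < 1 / 2) :
    ∫ z, exp (l * ‖z‖ ^ 2) ∂(stdGaussian E) = (1 - 2 * l) ^ (-(finrank ℝ E : ℝ) / 2) := by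
  have hl' : 0 < 1 - 2 * l := by linarith
  have integrand_eq (z : E) : isotropicGaussianPDF 1 z • exp (l * ‖z‖ ^ 2) =
      (2 * π) ^ (-(finrank ℝ E : ℝ) / 2) * exp (-((1 - 2 * l) / 2) * ‖z‖ ^ 2) := by
    rw [isotropicGaussianPDF, smul_eq_mul, mul_assoc, ← exp_add]
    ring_nf
  rw [stdGaussian_eq_withDensity,
    integral_withDensity_ofReal (by fun_prop) fun x => (isotropicGaussianPDF_pos one_pos x).le]
  simp_rw [integrand_eq]
  rw [integral_const_mul, GaussianFourier.integral_rexp_neg_mul_sq_norm (half_pos hl'),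
    show π / ((1 - 2 * l) / 2) = 2 * π / (1 - 2 * l) by field_simp,
    div_rpow (by positivity) hl'.le, neg_div, rpow_neg (by positivity), rpow_neg hl'.le]
  field_simp

lemma integrable_exp_mul_sq_norm_stdGaussian {l : ℝ} (hl : l < 1 / 2) :
    Integrable (fun z : E => exp (l * ‖z‖ ^ 2)) (stdGaussian E) := by
  refine not_imp_comm.1 integral_undef ?_
  rw [integral_exp_mul_sq_norm_stdGaussian hl]
  exact (rpow_pos_of_pos (by linarith) _).ne'

/-- Compare `‖z‖ ^ (2 * k)` with `exp (‖z‖² / (4n))`, whose expectation is at most `2`. -/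
lemma integral_norm_pow_two_mul_stdGaussian_le (k : ℕ) :
    ∫ z, ‖z‖ ^ (2 * k) ∂(stdGaussian E) ≤ 2 * k.factorial * (4 * finrank ℝ E) ^ k := by
  set n := finrank ℝ E with hn
  rcases n.eq_zero_or_pos with h0 | hpos
  · have : Subsingleton E := finrank_zero_iff.1 (hn ▸ h0)
    rcases k.eq_zero_or_pos with rfl | hk
    · simp
    · simp [Subsingleton.elim _ (0 : E), hk.ne', h0]
  have hn1 : (1 : ℝ) ≤ n := by exact_mod_cast hpos
  set l : ℝ := (4 * n)⁻¹ with hl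
  have hnl : n * (2 * l) = 1 / 2 := by rw [hl]; field_simp; norm_num
  have : 0 < l := by positivity
  have hl_lt : l < 1 / 2 := by nlinarith
  have pointwise (z : E) : ‖z‖ ^ (2 * k) ≤ k.factorial * (4 * n) ^ k * exp (l * ‖z‖ ^ 2) := by
    have := pow_div_factorial_le_exp (l * ‖z‖ ^ 2) (by positivity) k
    rw [div_le_iff₀ (by positivity), mul_pow, ← pow_mul, hl, inv_pow,
      inv_mul_le_iff₀ (by positivity)] at this
    linarith
  have exp_moment : ∫ z, exp (l * ‖z‖ ^ 2) ∂(stdGaussian E) ≤ 2 := by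
    rw [integral_exp_mul_sq_norm_stdGaussian hl_lt]
    linarith [one_sub_rpow_neg_half_le (n := n) (u := 2 * l) (by positivity) hnl.le]
  calc ∫ z, ‖z‖ ^ (2 * k) ∂(stdGaussian E)
      ≤ ∫ z, k.factorial * (4 * n) ^ k * exp (l * ‖z‖ ^ 2) ∂(stdGaussian E) :=
        integral_mono_of_nonneg (.of_forall fun z => by positivity)
          ((integrable_exp_mul_sq_norm_stdGaussian hl_lt).const_mul _) (.of_forall pointwise)
    _ ≤ k.factorial * (4 * n) ^ k * 2 := by
        rw [integral_const_mul]; gcongr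
    _ = 2 * k.factorial * (4 * n) ^ k := by ring

lemma map_rotation_stdGaussian {c s : ℝ} (h : c ^ 2 + s ^ 2 = 1) :
    ((stdGaussian E).prod (stdGaussian E)).map
      (fun p => (c • p.1 + s • p.2, -s • p.1 + c • p.2)) =
        (stdGaussian E).prod (stdGaussian E) := by
  have hnorm : ‖(⟨c, s⟩ : ℂ)‖ = 1 := by
    rw [Complex.norm_def, Complex.normSq_mk, ← sq, ← sq, h, sqrt_one]
  have hcos : cos (Complex.arg ⟨c, s⟩) = c := by
    rw [Complex.cos_arg (norm_ne_zero_iff.1 (by simp [hnorm])), hnorm, div_one]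
  have hsin : sin (Complex.arg ⟨c, s⟩) = s := by
    rw [Complex.sin_arg, hnorm, div_one]
  have rotation_eq : (fun p : E × E => (c • p.1 + s • p.2, -s • p.1 + c • p.2)) =
      ContinuousLinearMap.rotation (Complex.arg ⟨c, s⟩) := by
    ext p <;> simp [ContinuousLinearMap.rotation_apply, hcos, hsin]
  rw [rotation_eq]
  exact IsGaussian.map_rotation_eq_self integral_id_stdGaussian _

section Dilation

variable {r : ℝ} (hr : 0 ≤ r)

include hr

lemma map_sqrt_one_add_smul_stdGaussian :
    (stdGaussian E).map (√(1 + r) • ·) =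
      (stdGaussian E).withDensity fun z => ENNReal.ofReal (dilationDensity r z) := by
  rw [map_sqrt_smul_stdGaussian (by linarith), stdGaussian_eq_withDensity,
    ← withDensity_mul _ (by fun_prop) (by fun_prop)]
  congr with z
  rw [Pi.mul_apply, ← ENNReal.ofReal_mul (isotropicGaussianPDF_pos one_pos z).le]
  congr 1
  simp only [isotropicGaussianPDF, dilationDensity]
  rw [mul_rpow (by positivity) (by positivity), mul_one, mul_mul_mul_comm, ← exp_add]
  congr 2
  field_simp
  ring

lemma integrable_dilationDensity :
    Integrable (dilationDensity (E := E) r) (stdGaussian E) :=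
  (integrable_exp_mul_sq_norm_stdGaussian
    (by rw [div_lt_div_iff₀] <;> linarith)).const_mul _

lemma integral_dilationDensity : ∫ z, dilationDensity r z ∂(stdGaussian E) = 1 := by
  unfold dilationDensity
  rw [integral_const_mul, integral_exp_mul_sq_norm_stdGaussian
      (by rw [div_lt_div_iff₀] <;> linarith),
    show 1 - 2 * (r / (2 * (1 + r))) = (1 + r)⁻¹ by field_simp; ring,
    ← mul_rpow (by positivity) (by positivity), mul_inv_cancel₀ (by positivity), one_rpow]

variable (hr1 : r < 1)

include hr1

lemma integrable_dilationDensity_sq :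
    Integrable (fun z : E => dilationDensity r z ^ 2) (stdGaussian E) := by
  simp_rw [dilationDensity_sq hr]
  exact (integrable_exp_mul_sq_norm_stdGaussian
    (by rw [div_lt_div_iff₀] <;> linarith)).const_mul _

lemma integral_dilationDensity_sq :
    ∫ z, dilationDensity r z ^ 2 ∂(stdGaussian E) = (1 - r ^ 2) ^ (-(finrank ℝ E : ℝ) / 2) := by
  simp_rw [dilationDensity_sq hr]
  rw [integral_const_mul, integral_exp_mul_sq_norm_stdGaussian
      (by rw [div_lt_div_iff₀] <;> linarith),
    show 1 - 2 * (r / (1 + r)) = (1 - r) / (1 + r) by field_simp; ring,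
    ← mul_rpow (by positivity) (div_nonneg (by linarith) (by positivity))]
  congr 1
  field_simp
  ring

lemma integral_dilationDensity_sub_one_sq_le (hnr : finrank ℝ E * r ^ 2 ≤ 1 / 2) :
    ∫ z, (dilationDensity r z - 1) ^ 2 ∂(stdGaussian E) ≤ 2 * finrank ℝ E * r ^ 2 := by
  have chi_sq : ∫ z, (dilationDensity r z - 1) ^ 2 ∂(stdGaussian E) =
      ∫ z, dilationDensity r z ^ 2 ∂(stdGaussian E) - 1 := by
    have h2 : Integrable (fun z : E => 2 * dilationDensity r z) (stdGaussian E) :=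
      (integrable_dilationDensity hr).const_mul 2
    have h_sub : Integrable (fun z : E => dilationDensity r z ^ 2 - 2 * dilationDensity r z)
        (stdGaussian E) := (integrable_dilationDensity_sq hr hr1).sub h2
    simp_rw [sub_sq, one_pow, mul_one]
    rw [integral_add h_sub (integrable_const _),
      integral_sub (integrable_dilationDensity_sq hr hr1) h2, integral_const_mul,
      integral_dilationDensity hr, integral_const, probReal_univ]
    ring
  rw [chi_sq, integral_dilationDensity_sq hr hr1]
  linarith [one_sub_rpow_neg_half_le (sq_nonneg r) hnr]

end Dilation

end Gaussian

section Pointwise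

variable {E : Type*} [NormedAddCommGroup E] [InnerProductSpace ℝ E]

lemma exp_neg_sq_div_mul_le {v : ℝ} (hv : 0 < v) (s : ℝ) :
    exp (-s ^ 2 / (2 * v)) * s ≤ √v := by
  have h_exp : 1 + s ^ 2 / (2 * v) ≤ exp (s ^ 2 / (2 * v)) := by
    linarith [add_one_le_exp (s ^ 2 / (2 * v))]
  have h_amgm : s ≤ √v * (1 + s ^ 2 / (2 * v)) := by
    have h_sq : √v ^ 2 = v := sq_sqrt hv.le
    have h_complete : √v * (1 + s ^ 2 / (2 * v)) - s = ((√v - s) ^ 2 + √v ^ 2) / (2 * √v) := by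
      have : 0 < √v := sqrt_pos.2 hv
      rw [← h_sq, sqrt_sq this.le]
      field_simp
      ring
    linarith [show 0 ≤ ((√v - s) ^ 2 + √v ^ 2) / (2 * √v) by positivity]
  rw [neg_div, exp_neg, inv_mul_le_iff₀ (exp_pos _), mul_comm]
  exact h_amgm.trans (by gcongr)

lemma isotropicGaussianPDF_le {v : ℝ} (hv : 0 < v) (x : E) :
    isotropicGaussianPDF v x ≤ (2 * π * v) ^ (-(finrank ℝ E : ℝ) / 2) :=
  mul_le_of_le_one_right (by positivity)
    (exp_le_one_iff.2 (by rw [neg_div, neg_nonpos]; positivity))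

lemma norm_isotropicGaussianPDF_smul_le {v : ℝ} (hv : 0 < v) (x : E) :
    ‖isotropicGaussianPDF v x • -(v⁻¹ • x)‖ ≤
      (2 * π * v) ^ (-(finrank ℝ E : ℝ) / 2) * (v⁻¹ * √v) := by
  rw [norm_smul, norm_neg, norm_smul, norm_of_nonneg (isotropicGaussianPDF_pos hv x).le,
    norm_of_nonneg (inv_nonneg.2 hv.le), isotropicGaussianPDF, mul_assoc, mul_left_comm (exp _)]
  gcongr
  exact exp_neg_sq_div_mul_le hv _

lemma hasGradientAt_isotropicGaussianPDF [CompleteSpace E] (v : ℝ) (x : E) :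
    HasGradientAt (isotropicGaussianPDF v) (isotropicGaussianPDF v x • -(v⁻¹ • x)) x := by
  have h_exponent : HasFDerivAt (fun x : E => -‖x‖ ^ 2 / (2 * v)) (-(v⁻¹ • innerSL ℝ x)) x := by
    convert! (hasStrictFDerivAt_norm_sq x).hasFDerivAt.const_mul (-(2 * v)⁻¹) using 1
    · ext y
      ring
    · ext y
      simp
      ring
  rw [hasGradientAt_iff_hasFDerivAt]
  convert! (h_exponent.exp).const_mul ((2 * π * v) ^ (-(finrank ℝ E : ℝ) / 2)) using 1
  ext y
  simp [isotropicGaussianPDF, mul_assoc]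

end Pointwise

section Posterior

variable {E : Type*} [NormedAddCommGroup E] [InnerProductSpace ℝ E] [MeasurableSpace E]

/-- The density of the convolution of `Q` with the centred isotropic Gaussian of variance `v`. -/
def smoothedDensity (Q : Measure E) (v : ℝ) (x : E) : ℝ := ∫ y, isotropicGaussianPDF v (x - y) ∂Q

/-- The score `∇ log` of the convolution of `Q` with the centred isotropic Gaussian of
variance `v`. -/
def smoothedScore [CompleteSpace E] (Q : Measure E) (v : ℝ) : E → E :=
  gradient fun x => log (smoothedDensity Q v x)

/-- The conditional law of `Y ∼ Q` given `Y + √v Z = x`, for an independent standard Gaussian `Z`: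
by Bayes' rule its density with respect to `Q` is the normalized Gaussian likelihood. -/
def gaussianPosterior (Q : Measure E) [IsFiniteMeasure Q] (v : ℝ) : Kernel E E :=
  (Kernel.const E Q).withDensity fun x y =>
    ENNReal.ofReal (isotropicGaussianPDF v (x - y) / smoothedDensity Q v x)

variable [BorelSpace E] [FiniteDimensional ℝ E] (Q : Measure E) [IsProbabilityMeasure Q]
  {v : ℝ} (hv : 0 < v)

include hv

lemma integrable_isotropicGaussianPDF_sub (x : E) :
    Integrable (fun y => isotropicGaussianPDF v (x - y)) Q :=
  .of_bound (by fun_prop) ((2 * π * v) ^ (-(finrank ℝ E : ℝ) / 2)) (.of_forall fun y => by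
    rw [norm_of_nonneg (isotropicGaussianPDF_pos hv _).le]
    exact isotropicGaussianPDF_le hv _)

lemma smoothedDensity_pos (x : E) : 0 < smoothedDensity Q v x :=
  (integral_pos_iff_support_of_nonneg (fun y => (isotropicGaussianPDF_pos hv _).le)
    (integrable_isotropicGaussianPDF_sub Q hv x)).2 (by
      rw [Function.support_eq_univ fun y => (isotropicGaussianPDF_pos hv (x - y)).ne']
      simp)

lemma hasGradientAt_smoothedDensity (x : E) :
    HasGradientAt (smoothedDensity Q v)
      (∫ y, isotropicGaussianPDF v (x - y) • -(v⁻¹ • (x - y)) ∂Q) x := by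
  have h_grad_integrable :
      Integrable (fun y => isotropicGaussianPDF v (x - y) • -(v⁻¹ • (x - y))) Q :=
    .of_bound (by fun_prop) _ (.of_forall fun y => norm_isotropicGaussianPDF_smul_le hv _)
  have h_dual : InnerProductSpace.toDual ℝ E
      (∫ y, isotropicGaussianPDF v (x - y) • -(v⁻¹ • (x - y)) ∂Q) =
        ∫ y, InnerProductSpace.toDual ℝ E (isotropicGaussianPDF v (x - y) • -(v⁻¹ • (x - y))) ∂Q :=
    ((innerSL ℝ (E := E)).integral_comp_comm h_grad_integrable).symm
  rw [hasGradientAt_iff_hasFDerivAt, h_dual]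
  refine hasFDerivAt_integral_of_dominated_of_fderiv_le
    (F' := fun x y => InnerProductSpace.toDual ℝ E
      (isotropicGaussianPDF v (x - y) • -(v⁻¹ • (x - y)))) Filter.univ_mem
    (.of_forall fun x => (integrable_isotropicGaussianPDF_sub Q hv x).aestronglyMeasurable)
    (integrable_isotropicGaussianPDF_sub Q hv x)
    ((InnerProductSpace.toDual ℝ E).continuous.comp_aestronglyMeasurable h_grad_integrable.1)
    (.of_forall fun y x _ => ?_)
    (integrable_const ((2 * π * v) ^ (-(finrank ℝ E : ℝ) / 2) * (v⁻¹ * √v)))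
    (.of_forall fun y x _ => ?_)
  · rw [LinearIsometryEquiv.norm_map]
    exact norm_isotropicGaussianPDF_smul_le hv _
  · exact (hasFDerivAt_comp_sub y).2 (hasGradientAt_isotropicGaussianPDF v (x - y)).hasFDerivAt

lemma continuous_smoothedDensity : Continuous (smoothedDensity Q v) :=
  continuous_iff_continuousAt.2 fun x =>
    (hasGradientAt_smoothedDensity Q hv x).hasFDerivAt.continuousAt

lemma smoothedScore_eq_smul_integral (x : E) :
    smoothedScore Q v x = (smoothedDensity Q v x)⁻¹ •
      ∫ y, isotropicGaussianPDF v (x - y) • -(v⁻¹ • (x - y)) ∂Q := by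
  refine HasGradientAt.gradient ?_
  rw [hasGradientAt_iff_hasFDerivAt]
  convert! (hasGradientAt_smoothedDensity Q hv x).hasFDerivAt.log
    (smoothedDensity_pos Q hv x).ne' using 1
  ext y
  simp

lemma gaussianPosterior_apply (x : E) : gaussianPosterior Q v x = Q.withDensity fun y =>
    ENNReal.ofReal (isotropicGaussianPDF v (x - y) / smoothedDensity Q v x) := by
  have := (continuous_smoothedDensity Q hv).measurable
  rw [gaussianPosterior, Kernel.withDensity_apply _ (by fun_prop), Kernel.const_apply]

lemma integral_gaussianPosterior (f : E → E) (x : E) :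
    ∫ y, f y ∂(gaussianPosterior Q v x) =
      (smoothedDensity Q v x)⁻¹ • ∫ y, isotropicGaussianPDF v (x - y) • f y ∂Q := by
  rw [gaussianPosterior_apply Q hv, integral_withDensity_ofReal (by fun_prop)
      fun y => div_nonneg (isotropicGaussianPDF_pos hv _).le (smoothedDensity_pos Q hv x).le,
    ← integral_smul]
  simp_rw [smul_smul, div_eq_inv_mul]

lemma isMarkovKernel_gaussianPosterior : IsMarkovKernel (gaussianPosterior Q v) where
  isProbabilityMeasure x := by
    rw [gaussianPosterior_apply Q hv]
    constructor
    rw [withDensity_apply _ .univ, Measure.restrict_univ, ← ofReal_integral_eq_lintegral_ofReal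
        ((integrable_isotropicGaussianPDF_sub Q hv x).div_const _)
        (.of_forall fun y => div_nonneg (isotropicGaussianPDF_pos hv _).le
          (smoothedDensity_pos Q hv x).le), integral_div, ← smoothedDensity,
      div_self (smoothedDensity_pos Q hv x).ne', ENNReal.ofReal_one]

/-- Tweedie's formula. -/
lemma smoothedScore_eq_integral_gaussianPosterior (x : E) :
    smoothedScore Q v x = ∫ y, -(v⁻¹ • (x - y)) ∂(gaussianPosterior Q v x) := by
  rw [integral_gaussianPosterior Q hv, smoothedScore_eq_smul_integral Q hv]

lemma measurable_smoothedScore : Measurable (smoothedScore Q v) := by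
  have := (continuous_smoothedDensity Q hv).measurable
  rw [funext (smoothedScore_eq_smul_integral Q hv)]
  exact this.inv.smul (StronglyMeasurable.integral_prod_right (by fun_prop)).measurable

lemma lintegral_prod_stdGaussian_add {F : E × E → ENNReal} (hF : Measurable F) :
    ∫⁻ p, F (p.1 + √v • p.2, p.1) ∂(Q.prod (stdGaussian E)) =
      ∫⁻ x, ∫⁻ y, ENNReal.ofReal (isotropicGaussianPDF v (x - y)) * F (x, y) ∂Q := by
  have inner_integral (y : E) : ∫⁻ z, F (y + √v • z, y) ∂(stdGaussian E) =
      ∫⁻ x, ENNReal.ofReal (isotropicGaussianPDF v (x - y)) * F (x, y) := by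
    calc ∫⁻ z, F (y + √v • z, y) ∂(stdGaussian E)
        = ∫⁻ w, F (y + w, y) ∂((stdGaussian E).map (√v • ·)) :=
          (lintegral_map (f := fun w => F (y + w, y)) (by fun_prop) (by fun_prop)).symm
      _ = ∫⁻ w, ENNReal.ofReal (isotropicGaussianPDF v w) * F (y + w, y) := by
          rw [map_sqrt_smul_stdGaussian hv,
            lintegral_withDensity_eq_lintegral_mul _ (by fun_prop) (by fun_prop)]
          rfl
      _ = ∫⁻ x, ENNReal.ofReal (isotropicGaussianPDF v (x - y)) * F (x, y) := by
          rw [← lintegral_sub_right_eq_self _ y]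
          simp only [add_sub_cancel]
  rw [lintegral_prod _ (by fun_prop)]
  simp_rw [inner_integral]
  exact lintegral_lintegral_swap (by fun_prop)

lemma map_add_sqrt_smul_stdGaussian :
    (Q.prod (stdGaussian E)).map (fun p => p.1 + √v • p.2) =
      volume.withDensity fun x => ENNReal.ofReal (smoothedDensity Q v x) := by
  have := (continuous_smoothedDensity Q hv).measurable
  refine Measure.ext_of_lintegral _ fun f hf => ?_
  rw [lintegral_map hf (by fun_prop), lintegral_withDensity_eq_lintegral_mul _ (by fun_prop) hf,
    lintegral_prod_stdGaussian_add Q hv (F := fun q => f q.1) (by fun_prop)]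
  refine lintegral_congr fun x => ?_
  dsimp only
  rw [lintegral_mul_const _ (by fun_prop), Pi.mul_apply, smoothedDensity,
    ofReal_integral_eq_lintegral_ofReal (integrable_isotropicGaussianPDF_sub Q hv x)
      (.of_forall fun y => (isotropicGaussianPDF_pos hv _).le)]

/-- Bayes' rule. -/
lemma map_prodMk_eq_compProd_gaussianPosterior :
    (Q.prod (stdGaussian E)).map (fun p => (p.1 + √v • p.2, p.1)) =
      (Q.prod (stdGaussian E)).map (fun p => p.1 + √v • p.2) ⊗ₘ gaussianPosterior Q v := by
  have := isMarkovKernel_gaussianPosterior Q hv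
  have := (continuous_smoothedDensity Q hv).measurable
  refine Measure.ext_of_lintegral _ fun F hF => ?_
  rw [lintegral_map hF (by fun_prop), lintegral_prod_stdGaussian_add Q hv hF,
    Measure.lintegral_compProd hF, map_add_sqrt_smul_stdGaussian Q hv,
    lintegral_withDensity_eq_lintegral_mul _ (by fun_prop) hF.lintegral_kernel_prod_right']
  refine lintegral_congr fun x => ?_
  have hm := smoothedDensity_pos Q hv x
  rw [Pi.mul_apply, gaussianPosterior_apply Q hv,
    lintegral_withDensity_eq_lintegral_mul _ (by fun_prop) (by fun_prop),
    ← lintegral_const_mul _ (by fun_prop)]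
  refine lintegral_congr fun y => ?_
  rw [Pi.mul_apply, ← mul_assoc, ← ENNReal.ofReal_mul hm.le, mul_div_cancel₀ _ hm.ne']

/-- Tweedie's formula, as a conditional expectation. -/
lemma smoothedScore_ae_eq_condExp :
    (fun p => smoothedScore Q v (p.1 + √v • p.2)) =ᵐ[Q.prod (stdGaussian E)]
      (Q.prod (stdGaussian E))[fun p => -((√v)⁻¹ • p.2) |
        MeasurableSpace.comap (fun p => p.1 + √v • p.2) inferInstance] := by
  have := isMarkovKernel_gaussianPosterior Q hv
  have hX : Measurable fun p : E × E => p.1 + √v • p.2 := by fun_prop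
  have h_noise : (fun p : E × E => -((√v)⁻¹ • p.2)) =
      fun p => -(v⁻¹ • (p.1 + √v • p.2 - p.1)) := by
    ext p
    rw [add_sub_cancel_left, smul_smul, ← div_eq_inv_mul, sqrt_div_self', inv_eq_one_div]
  have h_int : Integrable (fun p : E × E => -((√v)⁻¹ • p.2)) (Q.prod (stdGaussian E)) :=
    (IsGaussian.integrable_id.comp_snd Q).smul _ |>.neg
  rw [h_noise] at h_int ⊢
  have h_condDistrib := ae_of_ae_map hX.aemeasurable
    (condDistrib_ae_eq_of_measure_eq_compProd _ measurable_fst.aemeasurable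
      (map_prodMk_eq_compProd_gaussianPosterior Q hv))
  have h_condExp := condExp_prod_ae_eq_integral_condDistrib
    (f := fun q : E × E => -(v⁻¹ • (q.1 - q.2))) hX measurable_fst.aemeasurable (by fun_prop) h_int
  filter_upwards [h_condDistrib, h_condExp] with p hp1 hp2
  rw [hp2, hp1, smoothedScore_eq_integral_gaussianPosterior Q hv]

end Posterior

section SquareIntegrable

lemma integrable_inner_of_memLp_two {α E : Type*} [MeasurableSpace α] {μ : Measure α}
    [NormedAddCommGroup E] [InnerProductSpace ℝ E] {f g : α → E} (hf : MemLp f 2 μ)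
    (hg : MemLp g 2 μ) : Integrable (fun x => inner ℝ (f x) (g x)) μ :=
  memLp_one_iff_integrable.1 ((innerSL ℝ (E := E)).memLp_of_bilin 1 hf hg)

lemma integral_norm_sub_smul_sq {α E : Type*} [MeasurableSpace α] {μ : Measure α}
    [NormedAddCommGroup E] [InnerProductSpace ℝ E] {f g : α → E} (hf : MemLp f 2 μ)
    (hg : MemLp g 2 μ) (c : ℝ) :
    ∫ x, ‖f x - c • g x‖ ^ 2 ∂μ =
      ∫ x, ‖f x‖ ^ 2 ∂μ - 2 * c * ∫ x, inner ℝ (f x) (g x) ∂μ + c ^ 2 * ∫ x, ‖g x‖ ^ 2 ∂μ := by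
  have hff := hf.integrable_norm_pow two_ne_zero
  have hfg := (integrable_inner_of_memLp_two hf hg).const_mul (2 * c)
  have hgg := (hg.integrable_norm_pow two_ne_zero).const_mul (c ^ 2)
  have h_sub : Integrable (fun x => ‖f x‖ ^ 2 - 2 * c * inner ℝ (f x) (g x)) μ := hff.sub hfg
  rw [← integral_const_mul, ← integral_const_mul, ← integral_sub hff hfg,
    ← integral_add h_sub hgg]
  refine integral_congr_ae (.of_forall fun x => ?_)
  simp only [norm_sub_sq_real, norm_smul, mul_pow, inner_smul_right, norm_eq_abs, sq_abs]
  ring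

lemma memLp_two_sq_norm_of_memLp_four {α E : Type*} [MeasurableSpace α] {μ : Measure α}
    [NormedAddCommGroup E] {f : α → E} (hf : MemLp f 4 μ) : MemLp (fun x => ‖f x‖ ^ 2) 2 μ := by
  refine (memLp_two_iff_integrable_sq (hf.1.norm.pow 2)).2 ?_
  simpa only [Pi.pow_apply, ← pow_mul] using hf.integrable_norm_pow four_ne_zero

lemma memLp_two_inner_of_memLp_four {α E : Type*} [MeasurableSpace α] {μ : Measure α}
    [NormedAddCommGroup E] [InnerProductSpace ℝ E] {f g : α → E} (hf : MemLp f 4 μ)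
    (hg : MemLp g 4 μ) : MemLp (fun x => inner ℝ (f x) (g x)) 2 μ := by
  have : ENNReal.HolderTriple 4 4 2 := ⟨by
    rw [← ENNReal.toReal_eq_toReal_iff' (by simp) (by simp),
      ENNReal.toReal_add (by simp) (by simp)]
    norm_num⟩
  exact (innerSL ℝ (E := E)).memLp_of_bilin 2 hf hg

end SquareIntegrable

section ScoreMoments

variable {E : Type*} [NormedAddCommGroup E] [InnerProductSpace ℝ E] [FiniteDimensional ℝ E]
  [MeasurableSpace E] [BorelSpace E]

lemma memLp_snd_prod_stdGaussian {α : Type*} [MeasurableSpace α] (μ : Measure α)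
    [IsFiniteMeasure μ] {p : ENNReal} (hp : p ≠ ⊤) :
    MemLp (fun q : α × E => q.2) p (μ.prod (stdGaussian E)) :=
  (IsGaussian.memLp_id _ p hp).comp_snd μ

lemma integral_norm_inv_sqrt_smul_pow_two_mul_le {α : Type*} [MeasurableSpace α] (μ : Measure α)
    [IsProbabilityMeasure μ] {v : ℝ} (hv : 0 < v) (k : ℕ) :
    ∫ q, ‖(√v)⁻¹ • q.2‖ ^ (2 * k) ∂(μ.prod (stdGaussian E)) ≤
      2 * k.factorial * (4 * finrank ℝ E / v) ^ k := by
  have h_scale (z : E) : ‖(√v)⁻¹ • z‖ ^ (2 * k) = (v ^ k)⁻¹ * ‖z‖ ^ (2 * k) := by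
    rw [norm_smul, norm_of_nonneg (by positivity), mul_pow, inv_pow, pow_mul √v, sq_sqrt hv.le]
  rw [integral_fun_snd (fun z : E => ‖(√v)⁻¹ • z‖ ^ (2 * k)), probReal_univ, one_smul]
  simp_rw [h_scale, integral_const_mul]
  calc (v ^ k)⁻¹ * ∫ z, ‖z‖ ^ (2 * k) ∂(stdGaussian E)
      ≤ (v ^ k)⁻¹ * (2 * k.factorial * (4 * finrank ℝ E) ^ k) := by
        gcongr
        exact integral_norm_pow_two_mul_stdGaussian_le k
    _ = 2 * k.factorial * (4 * finrank ℝ E / v) ^ k := by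
        rw [div_pow]
        ring

variable (Q : Measure E) [IsProbabilityMeasure Q] {v : ℝ} (hv : 0 < v)

include hv

lemma memLp_smoothedScore_add {p : ENNReal} (hp1 : 1 ≤ p) (hp : p ≠ ⊤) :
    MemLp (fun q : E × E => smoothedScore Q v (q.1 + √v • q.2)) p (Q.prod (stdGaussian E)) :=
  (((memLp_snd_prod_stdGaussian Q hp).const_smul (√v)⁻¹).neg.condExp hp1).ae_eq
    (smoothedScore_ae_eq_condExp Q hv).symm

lemma integral_norm_smoothedScore_pow_two_mul_le {k : ℕ} (hk : k ≠ 0) :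
    ∫ q, ‖smoothedScore Q v (q.1 + √v • q.2)‖ ^ (2 * k) ∂(Q.prod (stdGaussian E)) ≤
      2 * k.factorial * (4 * finrank ℝ E / v) ^ k := by
  have h_noise : MemLp (fun q : E × E => -((√v)⁻¹ • q.2)) (2 * k : ℕ)
      (Q.prod (stdGaussian E)) :=
    ((memLp_snd_prod_stdGaussian Q (ENNReal.natCast_ne_top _)).const_smul (√v)⁻¹).neg
  have jensen := integral_norm_condExp_rpow_le (p := (2 * k : ℕ))
    (m := .comap (fun q : E × E => q.1 + √v • q.2) inferInstance) (by norm_cast; omega)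
    (by simpa only [rpow_natCast] using h_noise.integrable_norm_pow (by omega))
  simp only [rpow_natCast, norm_neg] at jensen
  calc ∫ q, ‖smoothedScore Q v (q.1 + √v • q.2)‖ ^ (2 * k) ∂(Q.prod (stdGaussian E))
      ≤ ∫ q, ‖(√v)⁻¹ • q.2‖ ^ (2 * k) ∂(Q.prod (stdGaussian E)) :=
        (integral_congr_ae ((smoothedScore_ae_eq_condExp Q hv).fun_comp
          fun x => ‖x‖ ^ (2 * k))).trans_le jensen
    _ ≤ 2 * k.factorial * (4 * finrank ℝ E / v) ^ k :=
        integral_norm_inv_sqrt_smul_pow_two_mul_le Q hv k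

lemma integral_inner_smoothedScore {f : E → E} (hf : Measurable f)
    (hf2 : MemLp (fun q : E × E => f (q.1 + √v • q.2)) 2 (Q.prod (stdGaussian E))) :
    ∫ q, inner ℝ (smoothedScore Q v (q.1 + √v • q.2)) (f (q.1 + √v • q.2))
        ∂(Q.prod (stdGaussian E)) =
      -(√v)⁻¹ * ∫ q, inner ℝ q.2 (f (q.1 + √v • q.2)) ∂(Q.prod (stdGaussian E)) := by
  have hX : Measurable fun q : E × E => q.1 + √v • q.2 := by fun_prop
  have h_noise : MemLp (fun q : E × E => -((√v)⁻¹ • q.2)) 2 (Q.prod (stdGaussian E)) :=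
    ((memLp_snd_prod_stdGaussian Q ENNReal.ofNat_ne_top).const_smul (√v)⁻¹).neg
  have h_pull := condExp_bilin_of_stronglyMeasurable_right (innerSL ℝ (E := E))
    (hf.comp (comap_measurable _)).stronglyMeasurable (integrable_inner_of_memLp_two h_noise hf2)
    (h_noise.integrable one_le_two)
  calc ∫ q, inner ℝ (smoothedScore Q v (q.1 + √v • q.2)) (f (q.1 + √v • q.2))
        ∂(Q.prod (stdGaussian E))
      = ∫ q, inner ℝ (-((√v)⁻¹ • q.2)) (f (q.1 + √v • q.2)) ∂(Q.prod (stdGaussian E)) := by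
        refine (integral_congr_ae ?_).trans (integral_condExp hX.comap_le)
        filter_upwards [smoothedScore_ae_eq_condExp Q hv, h_pull] with q h_score h_pull
        rw [h_score]
        exact h_pull.symm
    _ = -(√v)⁻¹ * ∫ q, inner ℝ q.2 (f (q.1 + √v • q.2)) ∂(Q.prod (stdGaussian E)) := by
        simp_rw [← neg_smul, inner_smul_left, integral_const_mul, starRingEnd_apply,
          star_trivial]

end ScoreMoments

section NoiseSplitting

variable {v w : ℝ} (hv : 0 < v) (hw : 0 < w)

include hv hw

lemma sqrt_div_add_sq_add_sqrt_div_add_sq : √(v / (v + w)) ^ 2 + √(w / (v + w)) ^ 2 = 1 := by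
  rw [sq_sqrt (by positivity), sq_sqrt (by positivity), ← add_div, div_self (by positivity)]

lemma add_sqrt_smul_add_sqrt_smul {F : Type*} [AddCommGroup F] [Module ℝ F] (y z z' : F) :
    y + √v • z + √w • z' = y + √(v + w) • (√(v / (v + w)) • z + √(w / (v + w)) • z') := by
  have : 0 < v + w := by positivity
  rw [add_assoc, smul_add, smul_smul, smul_smul, ← sqrt_mul this.le, ← sqrt_mul this.le,
    mul_div_cancel₀ _ this.ne', mul_div_cancel₀ _ this.ne']

end NoiseSplitting

section NoiseRotation

variable {E : Type*} [NormedAddCommGroup E] [InnerProductSpace ℝ E] [FiniteDimensional ℝ E]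
  [MeasurableSpace E] [BorelSpace E] {α : Type*} [MeasurableSpace α] {μ : Measure α}
  [IsProbabilityMeasure μ]

lemma integral_inner_snd_prod_stdGaussian_eq_zero {g : α → E} (hg : MemLp g 2 μ) :
    ∫ q, inner ℝ q.2 (g q.1) ∂(μ.prod (stdGaussian E)) = 0 := by
  rw [integral_prod _ (integrable_inner_of_memLp_two
    (memLp_snd_prod_stdGaussian μ ENNReal.ofNat_ne_top) (hg.comp_fst _))]
  refine integral_eq_zero_of_ae (.of_forall fun a => ?_)
  simp_rw [real_inner_comm (g a)]
  exact (integral_inner IsGaussian.integrable_id (g a)).trans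
    (by simp only [id_eq, integral_id_stdGaussian, inner_zero_right, Pi.zero_apply])

variable {c s : ℝ} (hcs : c ^ 2 + s ^ 2 = 1)

include hcs

lemma measurePreserving_rotate_noise :
    MeasurePreserving
      (fun ω : (α × E) × E => ((ω.1.1, c • ω.1.2 + s • ω.2), -s • ω.1.2 + c • ω.2))
      ((μ.prod (stdGaussian E)).prod (stdGaussian E))
      ((μ.prod (stdGaussian E)).prod (stdGaussian E)) := by
  have rotation : MeasurePreserving (fun p : E × E => (c • p.1 + s • p.2, -s • p.1 + c • p.2))
      ((stdGaussian E).prod (stdGaussian E)) ((stdGaussian E).prod (stdGaussian E)) :=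
    ⟨by fun_prop, map_rotation_stdGaussian hcs⟩
  have assoc := measurePreserving_prodAssoc μ (stdGaussian E) (stdGaussian E)
  exact (assoc.symm _).comp (((MeasurePreserving.id μ).prod rotation).comp assoc)

lemma measurePreserving_merge_noise :
    MeasurePreserving (fun ω : (α × E) × E => (ω.1.1, c • ω.1.2 + s • ω.2))
      ((μ.prod (stdGaussian E)).prod (stdGaussian E)) (μ.prod (stdGaussian E)) :=
  measurePreserving_fst.comp (measurePreserving_rotate_noise hcs)

/-- In the rotated coordinates `W = c Z + s Z'`, `W' = -s Z + c Z'` one has `Z = c W - s W'`, and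
`W'` is independent of `(Y, W)`. -/
lemma integral_inner_merge_noise {F : α × E → E} (hF : MemLp F 2 (μ.prod (stdGaussian E))) :
    ∫ ω, inner ℝ ω.1.2 (F (ω.1.1, c • ω.1.2 + s • ω.2))
        ∂((μ.prod (stdGaussian E)).prod (stdGaussian E)) =
      c * ∫ q, inner ℝ q.2 (F q) ∂(μ.prod (stdGaussian E)) := by
  have h_kept : Integrable (fun ω : (α × E) × E => c * inner ℝ ω.1.2 (F ω.1))
      ((μ.prod (stdGaussian E)).prod (stdGaussian E)) :=
    ((integrable_inner_of_memLp_two (memLp_snd_prod_stdGaussian μ ENNReal.ofNat_ne_top)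
      hF).comp_fst _).const_mul c
  have h_fresh : Integrable (fun ω : (α × E) × E => s * inner ℝ ω.2 (F ω.1))
      ((μ.prod (stdGaussian E)).prod (stdGaussian E)) :=
    (integrable_inner_of_memLp_two (memLp_snd_prod_stdGaussian _ ENNReal.ofNat_ne_top)
      (hF.comp_fst _)).const_mul s
  have h_unrotate (z z' : E) : c • (c • z + s • z') - s • (-s • z + c • z') = z := by
    calc c • (c • z + s • z') - s • (-s • z + c • z') = (c ^ 2 + s ^ 2) • z := by module
      _ = z := by rw [hcs, one_smul]
  calc ∫ ω, inner ℝ ω.1.2 (F (ω.1.1, c • ω.1.2 + s • ω.2))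
        ∂((μ.prod (stdGaussian E)).prod (stdGaussian E))
      = ∫ ω, (c * inner ℝ ω.1.2 (F ω.1) - s * inner ℝ ω.2 (F ω.1))
          ∂((μ.prod (stdGaussian E)).prod (stdGaussian E)) := by
        refine Eq.trans (integral_congr_ae (.of_forall fun ω => ?_))
          ((measurePreserving_rotate_noise hcs).hasLaw.integral_comp (h_kept.sub h_fresh).1)
        simp only [Function.comp, ← real_inner_smul_left, ← inner_sub_left, h_unrotate]
    _ = c * ∫ q, inner ℝ q.2 (F q) ∂(μ.prod (stdGaussian E)) := by
        rw [integral_sub h_kept h_fresh, integral_const_mul, integral_const_mul,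
          integral_inner_snd_prod_stdGaussian_eq_zero hF, mul_zero, sub_zero,
          integral_fun_fst (fun q : α × E => inner ℝ q.2 (F q)), probReal_univ, one_smul]

end NoiseRotation

section AddNoise

variable {E G : Type*} [NormedAddCommGroup E] [InnerProductSpace ℝ E] [FiniteDimensional ℝ E]
  [MeasurableSpace E] [BorelSpace E] [NormedAddCommGroup G] {Q : Measure E}
  [IsProbabilityMeasure Q] {v w : ℝ} (hv : 0 < v) (hw : 0 < w) {f : E → G}

include hv hw

lemma memLp_comp_add_noise {p : ENNReal}
    (hf : MemLp (fun q : E × E => f (q.1 + √(v + w) • q.2)) p (Q.prod (stdGaussian E))) :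
    MemLp (fun ω : (E × E) × E => f (ω.1.1 + √v • ω.1.2 + √w • ω.2)) p
      ((Q.prod (stdGaussian E)).prod (stdGaussian E)) := by
  simp_rw [add_sqrt_smul_add_sqrt_smul hv hw]
  exact hf.comp_measurePreserving
    (measurePreserving_merge_noise (sqrt_div_add_sq_add_sqrt_div_add_sq hv hw))

lemma integral_comp_add_noise [NormedSpace ℝ G] (hf : StronglyMeasurable f) :
    ∫ ω, f (ω.1.1 + √v • ω.1.2 + √w • ω.2) ∂((Q.prod (stdGaussian E)).prod (stdGaussian E)) =
      ∫ q, f (q.1 + √(v + w) • q.2) ∂(Q.prod (stdGaussian E)) := by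
  simp_rw [add_sqrt_smul_add_sqrt_smul hv hw]
  have h_merge := measurePreserving_merge_noise (E := E) (μ := Q)
    (sqrt_div_add_sq_add_sqrt_div_add_sq hv hw)
  exact h_merge.hasLaw.integral_comp
    (f := fun q => f (q.1 + √(v + w) • q.2)) (hf.comp_measurable (by fun_prop)).aestronglyMeasurable

end AddNoise

section FisherInformation

variable {E : Type*} [NormedAddCommGroup E] [InnerProductSpace ℝ E] [FiniteDimensional ℝ E]
  [MeasurableSpace E] [BorelSpace E]

/-- The Fisher information `E ‖∇ log p(X)‖²` of `X = Y + √v Z`, where `p` is the density of `X`,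
`Y ∼ Q` and `Z` is an independent standard Gaussian. -/
def smoothedFisherInfo (Q : Measure E) (v : ℝ) : ℝ :=
  ∫ q, ‖smoothedScore Q v (q.1 + √v • q.2)‖ ^ 2 ∂(Q.prod (stdGaussian E))

variable (Q : Measure E) [IsProbabilityMeasure Q] {v : ℝ} (hv : 0 < v)

include hv

lemma smoothedFisherInfo_le : smoothedFisherInfo Q v ≤ 8 * finrank ℝ E / v := by
  have := integral_norm_smoothedScore_pow_two_mul_le Q hv one_ne_zero
  simp only [mul_one, Nat.factorial_one, Nat.cast_one, pow_one] at this
  calc smoothedFisherInfo Q v ≤ _ := this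
    _ = 8 * finrank ℝ E / v := by ring

lemma integral_inner_smoothedScore_prod {α : Type*} [MeasurableSpace α] {ν : Measure α}
    [IsProbabilityMeasure ν] {f : E × α → E} (hf : Measurable f)
    (hf2 : MemLp (fun ω : (E × E) × α => f (ω.1.1 + √v • ω.1.2, ω.2)) 2
      ((Q.prod (stdGaussian E)).prod ν)) :
    ∫ ω, inner ℝ (smoothedScore Q v (ω.1.1 + √v • ω.1.2)) (f (ω.1.1 + √v • ω.1.2, ω.2))
        ∂((Q.prod (stdGaussian E)).prod ν) =
      -(√v)⁻¹ * ∫ ω, inner ℝ ω.1.2 (f (ω.1.1 + √v • ω.1.2, ω.2))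
        ∂((Q.prod (stdGaussian E)).prod ν) := by
  have h_score := memLp_smoothedScore_add Q hv one_le_two ENNReal.ofNat_ne_top
  have h_noise := memLp_snd_prod_stdGaussian (E := E) Q (p := 2) ENNReal.ofNat_ne_top
  have h_slice := (hf2.integrable_norm_pow two_ne_zero).prod_left_ae
  rw [integral_prod_symm _ (integrable_inner_of_memLp_two (h_score.comp_fst ν) hf2),
    integral_prod_symm _ (integrable_inner_of_memLp_two (h_noise.comp_fst ν) hf2),
    ← integral_const_mul]
  refine integral_congr_ae ?_
  filter_upwards [h_slice] with a ha
  exact integral_inner_smoothedScore Q hv (f := fun x => f (x, a)) (by fun_prop)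
    ((memLp_two_iff_integrable_sq_norm (hf.comp (by fun_prop)).aestronglyMeasurable).2 ha)

variable {w : ℝ} (hw : 0 < w)

include hw

/-- `v ↦ S_v(X_v)` is a backward martingale: `S_{v+w}(X_{v+w})` is the conditional expectation of
`S_v(X_v)` given `X_{v+w}`. -/
lemma integral_inner_smoothedScore_add {f : E → E} (hf : Measurable f)
    (hf2 : MemLp (fun q : E × E => f (q.1 + √(v + w) • q.2)) 2 (Q.prod (stdGaussian E))) :
    ∫ ω, inner ℝ (smoothedScore Q v (ω.1.1 + √v • ω.1.2)) (f (ω.1.1 + √v • ω.1.2 + √w • ω.2))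
        ∂((Q.prod (stdGaussian E)).prod (stdGaussian E)) =
      ∫ q, inner ℝ (smoothedScore Q (v + w) (q.1 + √(v + w) • q.2)) (f (q.1 + √(v + w) • q.2))
        ∂(Q.prod (stdGaussian E)) := by
  have h_merge := integral_inner_merge_noise (sqrt_div_add_sq_add_sqrt_div_add_sq hv hw) hf2
  simp_rw [← add_sqrt_smul_add_sqrt_smul hv hw] at h_merge
  rw [integral_inner_smoothedScore_prod Q hv (f := fun p => f (p.1 + √w • p.2)) (by fun_prop)
      (memLp_comp_add_noise hv hw hf2), h_merge,
    integral_inner_smoothedScore Q (add_pos hv hw) hf hf2, ← mul_assoc, sqrt_div hv.le]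
  field_simp

/-- Orthogonality of backward-martingale increments. -/
lemma integral_norm_smoothedScore_sub_smul_sq (c : ℝ) :
    ∫ ω, ‖smoothedScore Q v (ω.1.1 + √v • ω.1.2) -
        c • smoothedScore Q (v + w) (ω.1.1 + √v • ω.1.2 + √w • ω.2)‖ ^ 2
        ∂((Q.prod (stdGaussian E)).prod (stdGaussian E)) =
      smoothedFisherInfo Q v - smoothedFisherInfo Q (v + w)
        + (c - 1) ^ 2 * smoothedFisherInfo Q (v + w) := by
  have hvw := add_pos hv hw
  have hS := memLp_smoothedScore_add Q hv one_le_two ENNReal.ofNat_ne_top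
  have hS' := memLp_smoothedScore_add Q hvw one_le_two ENNReal.ofNat_ne_top
  have h_meas := measurable_smoothedScore Q hvw
  rw [integral_norm_sub_smul_sq (hS.comp_fst _) (memLp_comp_add_noise hv hw hS'),
    integral_fun_fst (fun q : E × E => ‖smoothedScore Q v (q.1 + √v • q.2)‖ ^ 2),
    probReal_univ, one_smul,
    integral_inner_smoothedScore_add Q hv hw h_meas hS',
    integral_comp_add_noise hv hw (f := fun x => ‖smoothedScore Q (v + w) x‖ ^ 2) (by fun_prop)]
  simp_rw [real_inner_self_eq_norm_sq]
  rw [← smoothedFisherInfo, ← smoothedFisherInfo]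
  ring

end FisherInformation

section Dissipation

lemma mul_le_sq_div_two_mul_add {c : ℝ} (hc : 0 < c) (a t : ℝ) :
    a * t ≤ a ^ 2 / (2 * c) + c / 2 * t ^ 2 := by
  have h_sq : a ^ 2 / (2 * c) + c / 2 * t ^ 2 - a * t = (a - c * t) ^ 2 / (2 * c) := by
    field_simp
    ring
  linarith [show 0 ≤ (a - c * t) ^ 2 / (2 * c) by positivity]

lemma denoising_sub_mul_denoising_le {E : Type*} [NormedAddCommGroup E] [InnerProductSpace ℝ E]
    {v r : ℝ} (hv : 0 < v) (hr : 0 < r) (ρ : ℝ) (x y : E) :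
    (-2 * inner ℝ x y - ‖y‖ ^ 2) - ρ * (-2 * (1 + r)⁻¹ * inner ℝ x y - ‖y‖ ^ 2) ≤
      (ρ - 1) ^ 2 / (2 * (r * v)) + (3 / 2 * r * v * ‖x‖ ^ (2 * 2) + 3 * r * v * ‖y‖ ^ (2 * 2)) +
        (r * ‖x‖ ^ (2 * 1) + r * ‖y‖ ^ (2 * 1)) := by
  set t := ‖x‖ ^ 2 + 2 * ‖y‖ ^ 2 with ht
  have h_weight : |(1 + r)⁻¹ * ρ - 1| ≤ |ρ - 1| + r := by
    have h_split : (1 + r)⁻¹ * ρ - 1 = (1 + r)⁻¹ * ((ρ - 1) - r) := by field_simp; ring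
    rw [h_split, abs_mul, abs_of_pos (by positivity)]
    calc (1 + r)⁻¹ * |ρ - 1 - r| ≤ 1 * |ρ - 1 - r| := by
          gcongr
          exact inv_le_one_of_one_le₀ (by linarith)
      _ ≤ |ρ - 1| + r := by simpa [abs_of_pos hr] using abs_sub (ρ - 1) r
  have h_inner : 2 * |inner ℝ x y| ≤ ‖x‖ ^ 2 + ‖y‖ ^ 2 := by
    linarith [abs_real_inner_le_norm x y, two_mul_le_add_sq ‖x‖ ‖y‖]
  have h_young : |ρ - 1| * t ≤ (ρ - 1) ^ 2 / (2 * (r * v)) + r * v / 2 * t ^ 2 := by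
    simpa only [sq_abs] using mul_le_sq_div_two_mul_add (mul_pos hr hv) |ρ - 1| t
  have h_sq : t ^ 2 ≤ 3 * ‖x‖ ^ (2 * 2) + 6 * ‖y‖ ^ (2 * 2) := by
    rw [ht, pow_mul, pow_mul]
    linarith [sq_nonneg (‖x‖ ^ 2 - ‖y‖ ^ 2)]
  calc (-2 * inner ℝ x y - ‖y‖ ^ 2) - ρ * (-2 * (1 + r)⁻¹ * inner ℝ x y - ‖y‖ ^ 2)
      = (ρ - 1) * ‖y‖ ^ 2 + 2 * ((1 + r)⁻¹ * ρ - 1) * inner ℝ x y := by ring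
    _ ≤ |ρ - 1| * ‖y‖ ^ 2 + |(1 + r)⁻¹ * ρ - 1| * (2 * |inner ℝ x y|) := by
        rw [mul_right_comm, mul_comm |(1 + r)⁻¹ * ρ - 1|, ← abs_two, ← abs_mul, ← abs_mul, abs_two]
        gcongr
        exacts [le_abs_self _, le_abs_self _]
    _ ≤ |ρ - 1| * ‖y‖ ^ 2 + (|ρ - 1| + r) * (‖x‖ ^ 2 + ‖y‖ ^ 2) := by gcongr
    _ = |ρ - 1| * t + r * (‖x‖ ^ 2 + ‖y‖ ^ 2) := by ring
    _ ≤ (ρ - 1) ^ 2 / (2 * (r * v)) + r * v / 2 * t ^ 2 + r * (‖x‖ ^ 2 + ‖y‖ ^ 2) := by gcongr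
    _ ≤ (ρ - 1) ^ 2 / (2 * (r * v)) + r * v / 2 * (3 * ‖x‖ ^ (2 * 2) + 6 * ‖y‖ ^ (2 * 2)) +
        r * (‖x‖ ^ 2 + ‖y‖ ^ 2) := by gcongr
    _ = _ := by ring

variable {E : Type*} [NormedAddCommGroup E] [InnerProductSpace ℝ E] [FiniteDimensional ℝ E]
  [MeasurableSpace E] [BorelSpace E]

section DilateNoise

variable {α : Type*} [MeasurableSpace α] (μ : Measure α) [IsProbabilityMeasure μ] {r : ℝ}
  (hr : 0 ≤ r)

include hr

lemma map_dilate_noise :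
    (μ.prod (stdGaussian E)).map (fun q => (q.1, √(1 + r) • q.2)) =
      (μ.prod (stdGaussian E)).withDensity fun q => ENNReal.ofReal (dilationDensity r q.2) := by
  have h_map := Measure.map_prod_map μ (stdGaussian E) measurable_id
    (measurable_const_smul (√(1 + r)))
  rw [Measure.map_id, map_sqrt_one_add_smul_stdGaussian hr,
    prod_withDensity_right (by fun_prop)] at h_map
  exact h_map.symm

lemma integral_comp_dilate_noise {f : α × E → ℝ} (hf : Measurable f) :
    ∫ q, f (q.1, √(1 + r) • q.2) ∂(μ.prod (stdGaussian E)) =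
      ∫ q, dilationDensity r q.2 * f q ∂(μ.prod (stdGaussian E)) := by
  rw [← integral_map (φ := fun q : α × E => (q.1, √(1 + r) • q.2)) (by fun_prop)
      hf.aestronglyMeasurable,
    map_dilate_noise μ hr,
    integral_withDensity_ofReal (ρ := fun q : α × E => dilationDensity r q.2) (by fun_prop)
      fun q => dilationDensity_nonneg hr q.2]
  rfl

lemma memLp_dilationDensity_snd (hr1 : r < 1) :
    MemLp (fun q : α × E => dilationDensity r q.2) 2 (μ.prod (stdGaussian E)) :=
  MemLp.comp_snd ((memLp_two_iff_integrable_sq (by fun_prop)).2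
    (integrable_dilationDensity_sq hr hr1)) μ

lemma integrable_dilationDensity_snd_mul (hr1 : r < 1) {f : α × E → ℝ}
    (hf : MemLp f 2 (μ.prod (stdGaussian E))) :
    Integrable (fun q => dilationDensity r q.2 * f q) (μ.prod (stdGaussian E)) :=
  (memLp_dilationDensity_snd μ hr hr1).integrable_mul hf

lemma memLp_two_comp_dilate_noise (hr1 : r < 1) {f : α × E → E} (hf : Measurable f)
    (hf4 : MemLp f 4 (μ.prod (stdGaussian E))) :
    MemLp (fun q => f (q.1, √(1 + r) • q.2)) 2 (μ.prod (stdGaussian E)) := by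
  refine (memLp_two_iff_integrable_sq_norm (Measurable.aestronglyMeasurable (by fun_prop))).2 ?_
  refine (integrable_map_measure (g := fun q => ‖f q‖ ^ 2) (by fun_prop)
    (by fun_prop : AEMeasurable (fun q : α × E => (q.1, √(1 + r) • q.2)) _)).1 ?_
  rw [map_dilate_noise μ hr, integrable_withDensity_iff_integrable_smul' (by fun_prop) (by simp)]
  simpa only [ENNReal.toReal_ofReal (dilationDensity_nonneg hr _), smul_eq_mul] using
    integrable_dilationDensity_snd_mul μ hr hr1 (memLp_two_sq_norm_of_memLp_four hf4)

end DilateNoise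

variable (Q : Measure E) [IsProbabilityMeasure Q] {v : ℝ} (hv : 0 < v)

include hv

/-- Denoising score matching. -/
lemma integral_denoising_eq {f : E → E} (hf : Measurable f)
    (hf2 : MemLp (fun q : E × E => f (q.1 + √v • q.2)) 2 (Q.prod (stdGaussian E))) :
    ∫ q, (-2 * inner ℝ ((√v)⁻¹ • q.2) (f (q.1 + √v • q.2)) - ‖f (q.1 + √v • q.2)‖ ^ 2)
        ∂(Q.prod (stdGaussian E)) =
      smoothedFisherInfo Q v -
        ∫ q, ‖smoothedScore Q v (q.1 + √v • q.2) - f (q.1 + √v • q.2)‖ ^ 2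
          ∂(Q.prod (stdGaussian E)) := by
  have h_noise : Integrable (fun q : E × E => inner ℝ ((√v)⁻¹ • q.2) (f (q.1 + √v • q.2)))
      (Q.prod (stdGaussian E)) := integrable_inner_of_memLp_two
    ((memLp_snd_prod_stdGaussian (E := E) Q ENNReal.ofNat_ne_top).const_smul (√v)⁻¹) hf2
  have h_expand := integral_norm_sub_smul_sq
    (memLp_smoothedScore_add Q hv one_le_two ENNReal.ofNat_ne_top) hf2 1
  simp only [one_smul, mul_one, one_pow, one_mul] at h_expand
  rw [integral_sub (h_noise.const_mul _) (hf2.integrable_norm_pow two_ne_zero),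
    integral_const_mul, h_expand, integral_inner_smoothedScore Q hv hf hf2, smoothedFisherInfo]
  simp_rw [real_inner_smul_left, integral_const_mul]
  ring

lemma smoothedFisherInfo_eq_integral_denoising : smoothedFisherInfo Q v =
    ∫ q, (-2 * inner ℝ ((√v)⁻¹ • q.2) (smoothedScore Q v (q.1 + √v • q.2)) -
      ‖smoothedScore Q v (q.1 + √v • q.2)‖ ^ 2) ∂(Q.prod (stdGaussian E)) := by
  rw [integral_denoising_eq Q hv (measurable_smoothedScore Q hv)
    (memLp_smoothedScore_add Q hv one_le_two ENNReal.ofNat_ne_top)]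
  simp only [sub_self, norm_zero, ne_eq, OfNat.ofNat_ne_zero, not_false_eq_true, zero_pow,
    integral_zero, sub_zero]

lemma integral_denoising_le_smoothedFisherInfo {f : E → E} (hf : Measurable f)
    (hf2 : MemLp (fun q : E × E => f (q.1 + √v • q.2)) 2 (Q.prod (stdGaussian E))) :
    ∫ q, (-2 * inner ℝ ((√v)⁻¹ • q.2) (f (q.1 + √v • q.2)) - ‖f (q.1 + √v • q.2)‖ ^ 2)
        ∂(Q.prod (stdGaussian E)) ≤ smoothedFisherInfo Q v := by
  rw [integral_denoising_eq Q hv hf hf2]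
  exact sub_le_self _ (integral_nonneg fun q => sq_nonneg _)

lemma memLp_denoising_smoothedScore (a : ℝ) :
    MemLp (fun q : E × E => a * inner ℝ ((√v)⁻¹ • q.2) (smoothedScore Q v (q.1 + √v • q.2)) -
      ‖smoothedScore Q v (q.1 + √v • q.2)‖ ^ 2) 2 (Q.prod (stdGaussian E)) := by
  have h_noise : MemLp (fun q : E × E => (√v)⁻¹ • q.2) 4 (Q.prod (stdGaussian E)) :=
    (memLp_snd_prod_stdGaussian Q ENNReal.ofNat_ne_top).const_smul (√v)⁻¹
  have h_score := memLp_smoothedScore_add Q hv (p := 4) (by norm_num) ENNReal.ofNat_ne_top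
  exact ((memLp_two_inner_of_memLp_four h_noise h_score).const_mul a).sub
    (memLp_two_sq_norm_of_memLp_four h_score)

section Moments

variable {k : ℕ} (hk : k ≠ 0)

include hk

lemma integrable_noise_pow_add_smoothedScore_pow (a b : ℝ) :
    Integrable (fun q : E × E => a * ‖(√v)⁻¹ • q.2‖ ^ (2 * k) +
      b * ‖smoothedScore Q v (q.1 + √v • q.2)‖ ^ (2 * k)) (Q.prod (stdGaussian E)) := by
  have hk2 : 2 * k ≠ 0 := by omega
  have h_noise : MemLp (fun q : E × E => (√v)⁻¹ • q.2) (2 * k : ℕ) (Q.prod (stdGaussian E)) :=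
    (memLp_snd_prod_stdGaussian Q (ENNReal.natCast_ne_top _)).const_smul (√v)⁻¹
  have h_score := memLp_smoothedScore_add Q hv (p := (2 * k : ℕ)) (by norm_cast; omega)
    (ENNReal.natCast_ne_top _)
  exact ((h_noise.integrable_norm_pow hk2).const_mul a).add
    ((h_score.integrable_norm_pow hk2).const_mul b)

lemma integral_noise_pow_add_smoothedScore_pow_le {a b : ℝ} (ha : 0 < a) (hb : 0 < b) :
    ∫ q, (a * ‖(√v)⁻¹ • q.2‖ ^ (2 * k) +
        b * ‖smoothedScore Q v (q.1 + √v • q.2)‖ ^ (2 * k)) ∂(Q.prod (stdGaussian E)) ≤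
      (a + b) * (2 * k.factorial * (4 * finrank ℝ E / v) ^ k) := by
  have h_noise := integrable_noise_pow_add_smoothedScore_pow Q hv hk a 0
  have h_score := integrable_noise_pow_add_smoothedScore_pow Q hv hk 0 b
  simp only [zero_mul, add_zero, zero_add] at h_noise h_score
  rw [integral_add h_noise h_score, integral_const_mul, integral_const_mul, add_mul]
  gcongr
  · exact integral_norm_inv_sqrt_smul_pow_two_mul_le Q hv k
  · exact integral_norm_smoothedScore_pow_two_mul_le Q hv hk

end Moments

variable {r : ℝ} (hr : 0 < r) (hr1 : r < 1)

include hr hr1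

/-- Test the variational formula for the Fisher information at variance `v * (1 + r)` with the
score at variance `v`. -/
lemma integral_dilationDensity_mul_denoising_le :
    ∫ q, dilationDensity r q.2 *
        (-2 * (1 + r)⁻¹ * inner ℝ ((√v)⁻¹ • q.2) (smoothedScore Q v (q.1 + √v • q.2)) -
          ‖smoothedScore Q v (q.1 + √v • q.2)‖ ^ 2) ∂(Q.prod (stdGaussian E)) ≤
      smoothedFisherInfo Q (v * (1 + r)) := by
  have h_meas := measurable_smoothedScore Q hv
  have h_dilate (q : E × E) : q.1 + √(v * (1 + r)) • q.2 = q.1 + √v • √(1 + r) • q.2 := by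
    rw [smul_smul, sqrt_mul hv.le]
  have h_test : MemLp (fun q : E × E => smoothedScore Q v (q.1 + √(v * (1 + r)) • q.2)) 2
      (Q.prod (stdGaussian E)) := by
    simp_rw [h_dilate]
    exact memLp_two_comp_dilate_noise Q hr.le hr1
      (f := fun q => smoothedScore Q v (q.1 + √v • q.2)) (by fun_prop)
      (memLp_smoothedScore_add Q hv (by norm_num) ENNReal.ofNat_ne_top)
  refine le_of_eq_of_le ?_
    (integral_denoising_le_smoothedFisherInfo Q (by positivity) h_meas h_test)
  rw [← integral_comp_dilate_noise Q hr.le (by fun_prop)]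
  refine integral_congr_ae (.of_forall fun q => ?_)
  have h_sqrt : (√(v * (1 + r)))⁻¹ = (√v)⁻¹ * ((1 + r)⁻¹ * √(1 + r)) := by
    rw [sqrt_mul hv.le, mul_inv, ← div_eq_inv_mul _ (1 + r), sqrt_div_self', one_div]
  simp only [h_dilate, h_sqrt, real_inner_smul_left]
  ring

lemma smoothedFisherInfo_sub_le_integral :
    smoothedFisherInfo Q v - smoothedFisherInfo Q (v * (1 + r)) ≤
      ∫ q, (dilationDensity r q.2 - 1) ^ 2 / (2 * (r * v)) ∂(Q.prod (stdGaussian E)) +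
        ∫ q, (3 / 2 * r * v * ‖(√v)⁻¹ • q.2‖ ^ (2 * 2) +
          3 * r * v * ‖smoothedScore Q v (q.1 + √v • q.2)‖ ^ (2 * 2)) ∂(Q.prod (stdGaussian E)) +
        ∫ q, (r * ‖(√v)⁻¹ • q.2‖ ^ (2 * 1) +
          r * ‖smoothedScore Q v (q.1 + √v • q.2)‖ ^ (2 * 1)) ∂(Q.prod (stdGaussian E)) := by
  have h_density : Integrable (fun q : E × E => (dilationDensity r q.2 - 1) ^ 2 / (2 * (r * v)))
      (Q.prod (stdGaussian E)) :=
    ((memLp_dilationDensity_snd Q hr.le hr1).sub (memLp_const 1)).integrable_sq.div_const _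
  have h_fourth := integrable_noise_pow_add_smoothedScore_pow Q hv two_ne_zero (3 / 2 * r * v)
    (3 * r * v)
  have h_second := integrable_noise_pow_add_smoothedScore_pow Q hv one_ne_zero r r
  have h_denoising := (memLp_denoising_smoothedScore Q hv (-2)).integrable one_le_two
  have h_dilated := integrable_dilationDensity_snd_mul Q hr.le hr1
    (memLp_denoising_smoothedScore Q hv (-2 * (1 + r)⁻¹))
  refine (sub_le_sub_left (integral_dilationDensity_mul_denoising_le Q hv hr hr1) _).trans ?_
  rw [smoothedFisherInfo_eq_integral_denoising Q hv, ← integral_sub h_denoising h_dilated,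
    ← integral_add' h_density h_fourth, ← integral_add' (h_density.add h_fourth) h_second]
  exact integral_mono (h_denoising.sub h_dilated) ((h_density.add h_fourth).add h_second)
    fun q => denoising_sub_mul_denoising_le hv hr _ _ _

lemma smoothedFisherInfo_sub_le (hnr : finrank ℝ E * r ^ 2 ≤ 1 / 2) :
    smoothedFisherInfo Q v - smoothedFisherInfo Q (v * (1 + r)) ≤
      305 * finrank ℝ E ^ 2 * r / v := by
  have h_finrank : (finrank ℝ E : ℝ) ≤ (finrank ℝ E : ℝ) ^ 2 := by
    exact_mod_cast Nat.le_self_pow two_ne_zero (finrank ℝ E)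
  have density_le : ∫ q, (dilationDensity r q.2 - 1) ^ 2 / (2 * (r * v))
      ∂(Q.prod (stdGaussian E)) ≤ 2 * finrank ℝ E * r ^ 2 / (2 * (r * v)) := by
    rw [integral_div, integral_fun_snd (fun z : E => (dilationDensity r z - 1) ^ 2),
      probReal_univ, one_smul]
    gcongr
    exact integral_dilationDensity_sub_one_sq_le hr.le hr1 hnr
  have fourth_le := integral_noise_pow_add_smoothedScore_pow_le Q hv two_ne_zero
    (a := 3 / 2 * r * v) (b := 3 * r * v) (by positivity) (by positivity)
  have second_le := integral_noise_pow_add_smoothedScore_pow_le Q hv one_ne_zero hr hr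
  calc smoothedFisherInfo Q v - smoothedFisherInfo Q (v * (1 + r))
      ≤ _ := smoothedFisherInfo_sub_le_integral Q hv hr hr1
    _ ≤ _ := add_le_add (add_le_add density_le fourth_le) second_le
    _ = (17 * finrank ℝ E + 288 * finrank ℝ E ^ 2) * r / v := by
        push_cast [Nat.factorial]
        field_simp
        ring
    _ ≤ 305 * finrank ℝ E ^ 2 * r / v := by
        gcongr
        linarith

end Dissipation

section Scaling

variable {E : Type*} [NormedAddCommGroup E] [InnerProductSpace ℝ E] {v c : ℝ} (hv : 0 < v)
  (hc : 0 < c)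

include hv hc

lemma isotropicGaussianPDF_smul (x : E) :
    isotropicGaussianPDF (c ^ 2 * v) (c • x) =
      (c ^ 2) ^ (-(finrank ℝ E : ℝ) / 2) * isotropicGaussianPDF v x := by
  have h_exponent : -‖c • x‖ ^ 2 / (2 * (c ^ 2 * v)) = -‖x‖ ^ 2 / (2 * v) := by
    rw [norm_smul, norm_of_nonneg hc.le, mul_pow]
    field_simp
  rw [isotropicGaussianPDF, isotropicGaussianPDF, h_exponent, mul_left_comm (2 * π),
    mul_rpow (by positivity) (by positivity), mul_assoc]

variable [FiniteDimensional ℝ E] [MeasurableSpace E] [BorelSpace E] (Q : Measure E)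
  [IsProbabilityMeasure Q]

lemma smoothedScore_map_smul (x : E) :
    smoothedScore (Q.map (c • ·)) (c ^ 2 * v) (c • x) = c⁻¹ • smoothedScore Q v x := by
  have hcv : 0 < c ^ 2 * v := by positivity
  have : IsProbabilityMeasure (Q.map (c • ·)) := Measure.isProbabilityMeasure_map (by fun_prop)
  set a : ℝ := (c ^ 2) ^ (-(finrank ℝ E : ℝ) / 2) with ha
  have ha0 : 0 < a := by positivity
  have h_density : smoothedDensity (Q.map (c • ·)) (c ^ 2 * v) (c • x) =
      a * smoothedDensity Q v x := by
    rw [smoothedDensity, integral_map (by fun_prop) (by fun_prop)]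
    simp_rw [← smul_sub, isotropicGaussianPDF_smul hv hc]
    rw [integral_const_mul, smoothedDensity]
  have h_displacement (y : E) : (c ^ 2 * v)⁻¹ • c • (x - y) = c⁻¹ • v⁻¹ • (x - y) := by
    rw [smul_smul, smul_smul]
    congr 1
    field_simp
  rw [smoothedScore_eq_smul_integral _ hcv, smoothedScore_eq_smul_integral Q hv, h_density,
    integral_map (by fun_prop) (by fun_prop)]
  simp_rw [← smul_sub, isotropicGaussianPDF_smul hv hc, h_displacement, ← ha, ← smul_neg,
    mul_smul, smul_comm _ c⁻¹]
  rw [integral_smul, integral_smul, smul_smul, smul_smul, smul_smul]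
  congr 1
  field_simp

end Scaling

section ExpIncrements

lemma exp_sub_one_le_two_mul {x : ℝ} (hx : 0 ≤ x) (hx1 : x ≤ 1) : exp x - 1 ≤ 2 * x := by
  have := abs_exp_sub_one_le (abs_le.2 ⟨by linarith, hx1⟩)
  rw [abs_of_nonneg hx] at this
  exact (le_abs_self _).trans this

lemma exp_neg_half_sq (G : ℝ) : exp (-G / 2) ^ 2 = exp (-G) := by
  rw [sq, ← exp_add, add_halves]

lemma sqrt_one_sub_exp_neg_half_sq (G : ℝ) :
    √(1 - exp (-G / 2) ^ 2) = exp (-G / 2) * √(exp G - 1) := by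
  have h_factor : 1 - exp (-G / 2) ^ 2 = exp (-G / 2) ^ 2 * (exp G - 1) := by
    rw [exp_neg_half_sq, mul_sub_one, ← exp_add, neg_add_cancel, exp_zero]
  rw [h_factor, sqrt_mul (sq_nonneg _), sqrt_sq (exp_pos _).le]

lemma one_sub_exp_neg_mul_one_sub (G v : ℝ) :
    1 - exp (-G) * (1 - v) = exp (-G / 2) ^ 2 * (v + (exp G - 1)) := by
  have h_cancel : exp (-G) * exp G = 1 := by rw [← exp_add, neg_add_cancel, exp_zero]
  rw [exp_neg_half_sq]
  linear_combination -h_cancel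

lemma inv_exp_neg_half_sub_one_sq_le {G : ℝ} (hG : 0 ≤ G) (hG1 : G ≤ 1) :
    ((exp (-G / 2))⁻¹ - 1) ^ 2 ≤ G := by
  have h_le : (exp (-G / 2))⁻¹ - 1 ≤ G := by
    rw [← exp_neg, neg_div, neg_neg]
    linarith [exp_sub_one_le_two_mul (show 0 ≤ G / 2 by positivity) (by linarith)]
  have h_nonneg : 0 ≤ (exp (-G / 2))⁻¹ - 1 := by
    rw [← exp_neg, neg_div, neg_neg]
    linarith [one_le_exp (show 0 ≤ G / 2 by positivity)]
  nlinarith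

end ExpIncrements

section OrnsteinUhlenbeck

variable {E : Type*} [NormedAddCommGroup E] [InnerProductSpace ℝ E] [FiniteDimensional ℝ E]
  [MeasurableSpace E] [BorelSpace E] (Q : Measure E) [IsProbabilityMeasure Q] {v r c : ℝ}
  (hv : 0 < v)

include hv

lemma integral_norm_smoothedScore_sub_sq_le (hr : 0 < r) (hr1 : r < 1)
    (hnr : finrank ℝ E * r ^ 2 ≤ 1 / 2) (hc : 0 < c) :
    ∫ ω, ‖smoothedScore Q v (ω.1.1 + √v • ω.1.2) -
        smoothedScore (Q.map (c • ·)) (c ^ 2 * (v + v * r))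
          (c • (ω.1.1 + √v • ω.1.2 + √(v * r) • ω.2))‖ ^ 2
        ∂((Q.prod (stdGaussian E)).prod (stdGaussian E)) ≤
      305 * finrank ℝ E ^ 2 * r / v + (c⁻¹ - 1) ^ 2 * (8 * finrank ℝ E / v) := by
  simp_rw [smoothedScore_map_smul (show 0 < v + v * r by positivity) hc]
  rw [integral_norm_smoothedScore_sub_smul_sq Q hv (mul_pos hv hr)]
  have h_dissipation := smoothedFisherInfo_sub_le Q hv hr hr1 hnr
  rw [mul_one_add] at h_dissipation
  gcongr
  calc smoothedFisherInfo Q (v + v * r) ≤ 8 * finrank ℝ E / (v + v * r) :=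
        smoothedFisherInfo_le Q (by positivity)
    _ ≤ 8 * finrank ℝ E / v := by
        gcongr
        exact le_add_of_nonneg_right (by positivity)

lemma integral_norm_smoothedScore_sub_ornsteinUhlenbeck_sq_le (hv1 : v ≤ 1) {G : ℝ} (hG : 0 < G)
    (hGv : 4 * (finrank ℝ E + 1) * G ≤ v) :
    ∫ ω, ‖smoothedScore Q v (ω.1.1 + √v • ω.1.2) -
        smoothedScore (Q.map (exp (-G / 2) • ·)) (1 - exp (-G) * (1 - v))
          (exp (-G / 2) • (ω.1.1 + √v • ω.1.2) + √(1 - exp (-G / 2) ^ 2) • ω.2)‖ ^ 2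
        ∂((Q.prod (stdGaussian E)).prod (stdGaussian E)) ≤
      618 * finrank ℝ E ^ 2 * G / v ^ 2 := by
  set n : ℝ := (finrank ℝ E : ℝ) with hn
  have hn0 : 0 ≤ n := Nat.cast_nonneg _
  have hn_sq : n ≤ n ^ 2 := by
    rw [hn]
    exact_mod_cast Nat.le_self_pow two_ne_zero (finrank ℝ E)
  have hG1 : G ≤ 1 := by nlinarith [mul_nonneg hn0 hG.le]
  set r := (exp G - 1) / v with hr
  have hvr : exp G - 1 = v * r := (mul_div_cancel₀ _ hv.ne').symm
  have hr0 : 0 < r := div_pos (by linarith [add_one_lt_exp hG.ne']) hv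
  have hr_le : r ≤ 2 * G / v := by
    rw [hr]
    gcongr
    exact exp_sub_one_le_two_mul hG.le hG1
  have hr_small : 2 * (n + 1) * r ≤ 1 :=
    calc 2 * (n + 1) * r ≤ 2 * (n + 1) * (2 * G / v) := by gcongr
      _ = 4 * (n + 1) * G / v := by ring
      _ ≤ 1 := (div_le_one hv).2 hGv
  have hnr : 0 ≤ n * r := by positivity
  simp_rw [sqrt_one_sub_exp_neg_half_sq, one_sub_exp_neg_mul_one_sub, mul_smul, ← smul_add, hvr]
  refine (integral_norm_smoothedScore_sub_sq_le Q hv hr0 (by linarith) (by nlinarith)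
    (exp_pos _)).trans ?_
  calc 305 * n ^ 2 * r / v + ((exp (-G / 2))⁻¹ - 1) ^ 2 * (8 * n / v)
      ≤ 305 * n ^ 2 * (2 * G / v) / v + G * (8 * n ^ 2 / (v * v)) := by
        gcongr
        · exact inv_exp_neg_half_sub_one_sq_le hG.le hG1
        · exact mul_le_of_le_one_left hv.le hv1
    _ = 618 * n ^ 2 * G / v ^ 2 := by
        field_simp
        ring

end OrnsteinUhlenbeck

section DiffusionSchedule

variable {g : ℝ → ℝ} {T a b c e : ℝ} (hg : ContinuousOn g (Set.Icc 0 T))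

include hg

lemma intervalIntegrable_sq_of_continuousOn (ha : 0 ≤ a) (hab : a ≤ b) (hb : b ≤ T) :
    IntervalIntegrable (fun u => g u ^ 2) volume a b := by
  refine ((hg.pow 2).mono ?_).intervalIntegrable
  rw [Set.uIcc_of_le hab]
  exact Set.Icc_subset_Icc ha hb

lemma Gvar_add_Gvar (ha : 0 ≤ a) (hab : a ≤ b) (hbc : b ≤ c) (hc : c ≤ T) :
    Gvar g a b + Gvar g b c = Gvar g a c :=
  intervalIntegral.integral_add_adjacent_intervals
    (intervalIntegrable_sq_of_continuousOn hg ha hab (hbc.trans hc))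
    (intervalIntegrable_sq_of_continuousOn hg (ha.trans hab) hbc hc)

lemma alphaF_mul_alphaF (ha : 0 ≤ a) (hab : a ≤ b) (hbc : b ≤ c) (hc : c ≤ T) :
    alphaF g b c * alphaF g a b = alphaF g a c := by
  rw [alphaF, alphaF, alphaF, ← exp_add, ← Gvar_add_Gvar hg ha hab hbc hc]
  congr 1
  ring

lemma sigmaSq_eq_one_sub (hb : 0 ≤ b) (hbc : b ≤ c) (hc : c ≤ T) :
    sigmaSq g c = 1 - exp (-Gvar g b c) * (1 - sigmaSq g b) := by
  rw [sigmaSq, sigmaSq, sub_sub_cancel, ← exp_add, ← Gvar_add_Gvar hg le_rfl hb hbc hc]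
  congr 2
  ring

lemma Gvar_le_Gvar (ha : 0 ≤ a) (hab : a ≤ b) (hbc : b ≤ c) (hce : c ≤ e) (he : e ≤ T) :
    Gvar g b c ≤ Gvar g a e :=
  intervalIntegral.integral_mono_interval hab hbc hce (ae_of_all _ fun u => sq_nonneg (g u))
    (intervalIntegrable_sq_of_continuousOn hg ha (hab.trans (hbc.trans hce)) he)

lemma sigmaSq_le_sigmaSq (ha : 0 ≤ a) (hab : a ≤ b) (hb : b ≤ T) : sigmaSq g a ≤ sigmaSq g b := by
  have := Gvar_le_Gvar hg le_rfl le_rfl ha hab hb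
  rw [sigmaSq, sigmaSq]
  gcongr

variable (hpos : ∀ u ∈ Set.Ioc (0 : ℝ) T, 0 < g u)

include hpos

lemma Gvar_pos (ha : 0 ≤ a) (hab : a < b) (hb : b ≤ T) : 0 < Gvar g a b :=
  intervalIntegral.intervalIntegral_pos_of_pos_on
    (intervalIntegrable_sq_of_continuousOn hg ha hab.le hb)
    (fun u hu => pow_pos (hpos u ⟨ha.trans_lt hu.1, hu.2.le.trans hb⟩) 2) hab

lemma sigmaSq_pos (ha : 0 < a) (haT : a ≤ T) : 0 < sigmaSq g a :=
  sub_pos.2 (exp_lt_one_iff.2 (neg_lt_zero.2 (Gvar_pos hg hpos le_rfl ha haT)))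

end DiffusionSchedule

section ForwardProcess

lemma stdGauss_eq_stdGaussian (d : ℕ) : stdGauss d = stdGaussian (Vec d) := by
  rw [stdGaussian_eq_withDensity, stdGauss, gaussMeasure]
  simp_rw [gaussDensity, isotropicGaussianPDF, finrank_euclideanSpace_fin, sub_zero]

variable {d : ℕ} (P : Measure (Vec d)) {g : ℝ → ℝ} {T : ℝ}

/-- `E‖∇log p_t(x_t) − ∇log p_s(x_s)‖²` under the joint forward coupling of `x_t` and `x_s`. -/
def fwdScoreIncrementSq (d : ℕ) (P : Measure (Vec d)) (g : ℝ → ℝ) (t s : ℝ) : ℝ :=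
  ∫ ω, ‖fwdScore d P g t (xt d g t ω) - fwdScore d P g s (xts d g t s ω)‖ ^ 2
    ∂(coupleMeasure d P)

lemma fwdScore_eq_smoothedScore (t : ℝ) :
    fwdScore d P g t = smoothedScore (P.map (alphaF g 0 t • ·)) (sigmaSq g t) := by
  have h_density : forwardDensity d P g t =
      smoothedDensity (P.map (alphaF g 0 t • ·)) (sigmaSq g t) := by
    funext x
    have h_cont : Continuous fun y => isotropicGaussianPDF (sigmaSq g t) (x - y) :=
      (continuous_isotropicGaussianPDF _).comp (continuous_sub_left x)
    rw [forwardDensity, smoothedDensity, integral_map (by fun_prop) h_cont.aestronglyMeasurable]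
    simp_rw [isotropicGaussianPDF, finrank_euclideanSpace_fin]
    rw [integral_const_mul]
  rw [fwdScore, h_density]
  rfl

variable [IsProbabilityMeasure P]

lemma measurePreserving_coupleMeasure (a : ℝ) :
    MeasurePreserving (fun ω : Vec d × Vec d × Vec d => ((a • ω.1, ω.2.1), ω.2.2))
      (coupleMeasure d P)
      (((P.map (a • ·)).prod (stdGaussian (Vec d))).prod (stdGaussian (Vec d))) := by
  have h_scale : MeasurePreserving (fun x : Vec d => a • x) P (P.map (a • ·)) :=
    ⟨by fun_prop, rfl⟩
  have := Measure.isProbabilityMeasure_map (μ := P) (f := (a • ·)) (by fun_prop)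
  rw [coupleMeasure, stdGauss_eq_stdGaussian]
  exact ((measurePreserving_prodAssoc _ _ _).symm _).comp (h_scale.prod (.id _))

variable (hg : ContinuousOn g (Set.Icc 0 T)) (hpos : ∀ u ∈ Set.Ioc (0 : ℝ) T, 0 < g u)

include hg hpos

lemma fwdScoreIncrementSq_le {t s : ℝ} (ht : 0 < t) (hts : t < s) (hs : s ≤ T)
    (h_step : 4 * (d + 1) * Gvar g t s ≤ sigmaSq g t) :
    fwdScoreIncrementSq d P g t s ≤ 618 * d ^ 2 * Gvar g t s / sigmaSq g t ^ 2 := by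
  have hv := sigmaSq_pos hg hpos ht (hts.le.trans hs)
  have hw := sigmaSq_pos hg hpos (ht.trans hts) hs
  set Q := P.map (alphaF g 0 t • ·) with hQ
  have hQ_prob : IsProbabilityMeasure Q := Measure.isProbabilityMeasure_map (by fun_prop)
  have h_marginal : P.map (alphaF g 0 s • ·) = Q.map (alphaF g t s • ·) := by
    rw [hQ, Measure.map_map (by fun_prop) (by fun_prop)]
    simp_rw [Function.comp_def, smul_smul, alphaF_mul_alphaF hg le_rfl ht.le hts.le hs]
  have hR_prob : IsProbabilityMeasure (Q.map (alphaF g t s • ·)) :=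
    Measure.isProbabilityMeasure_map (by fun_prop)
  have h_bound := integral_norm_smoothedScore_sub_ornsteinUhlenbeck_sq_le Q hv
    (sub_le_self _ (exp_pos _).le) (Gvar_pos hg hpos ht.le hts hs) (by simpa using h_step)
  rw [← sigmaSq_eq_one_sub hg ht.le hts.le hs, finrank_euclideanSpace_fin] at h_bound
  refine le_of_eq_of_le ?_ h_bound
  rw [← (measurePreserving_coupleMeasure P (alphaF g 0 t)).hasLaw.integral_comp,
    fwdScoreIncrementSq, fwdScore_eq_smoothedScore, fwdScore_eq_smoothedScore, h_marginal]
  · rfl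
  · have := measurable_smoothedScore Q hv
    have := measurable_smoothedScore (Q.map (alphaF g t s • ·)) hw
    rw [alphaF] at this
    fun_prop

variable {a b : ℝ} (ha : 0 < a) (hab : a < b) (hb : b ≤ T)
  (h_step : 4 * (d + 1) * Gvar g a b ≤ sigmaSq g a)

include ha hb h_step

lemma fwdScoreIncrementSq_le_of_mem_Ioo {t : ℝ} (ht : t ∈ Set.Ioo a b) :
    fwdScoreIncrementSq d P g t b ≤ 618 * d ^ 2 * Gvar g a b / sigmaSq g a ^ 2 := by
  have h_var := sigmaSq_pos hg hpos ha (ht.1.le.trans (ht.2.le.trans hb))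
  have h_Gvar_pos := Gvar_pos hg hpos ha.le (ht.1.trans ht.2) hb
  have h_Gvar := Gvar_le_Gvar hg ha.le ht.1.le ht.2.le le_rfl hb
  have h_sigmaSq := sigmaSq_le_sigmaSq hg ha.le ht.1.le (ht.2.le.trans hb)
  calc fwdScoreIncrementSq d P g t b ≤ 618 * d ^ 2 * Gvar g t b / sigmaSq g t ^ 2 :=
        fwdScoreIncrementSq_le P hg hpos (ha.trans ht.1) ht.2 hb
          (le_trans (by gcongr) (h_step.trans h_sigmaSq))
    _ ≤ 618 * d ^ 2 * Gvar g a b / sigmaSq g a ^ 2 := by gcongr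

include hab

lemma intervalIntegral_sq_mul_fwdScoreIncrementSq_le :
    ∫ t in a..b, g t ^ 2 * fwdScoreIncrementSq d P g t b ≤
      618 * d ^ 2 * (Gvar g a b ^ 2 / sigmaSq g a ^ 2) :=
  calc ∫ t in a..b, g t ^ 2 * fwdScoreIncrementSq d P g t b
      ≤ ∫ t in a..b, g t ^ 2 * (618 * d ^ 2 * Gvar g a b / sigmaSq g a ^ 2) := by
        rw [intervalIntegral.integral_of_le hab.le, intervalIntegral.integral_of_le hab.le,
          integral_Ioc_eq_integral_Ioo, integral_Ioc_eq_integral_Ioo]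
        refine integral_mono_of_nonneg (ae_of_all _ fun t => mul_nonneg (sq_nonneg _)
          (integral_nonneg fun _ => sq_nonneg _)) ?_ ?_
        · exact ((intervalIntegrable_iff_integrableOn_Ioo_of_le hab.le).1
            (intervalIntegrable_sq_of_continuousOn hg ha.le hab.le hb)).mul_const _
        · filter_upwards [ae_restrict_mem measurableSet_Ioo] with t ht
          gcongr
          exact fwdScoreIncrementSq_le_of_mem_Ioo P hg hpos ha hb h_step ht
    _ = 618 * d ^ 2 * (Gvar g a b ^ 2 / sigmaSq g a ^ 2) := by
        rw [intervalIntegral.integral_mul_const, ← Gvar]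
        ring

end ForwardProcess

lemma four_mul_succ_mul_le_of_div_le {d : ℕ} {G v : ℝ} (hG : 0 < G) (hv : 0 < v)
    (h : G / v ≤ 1 / (618 * d)) : 4 * (d + 1) * G ≤ v := by
  have hd : (1 : ℝ) ≤ d := by
    rcases Nat.eq_zero_or_pos d with rfl | hd
    · simp only [Nat.cast_zero, mul_zero, div_zero] at h
      exact absurd h (div_pos hG hv).not_ge
    · exact_mod_cast hd
  have := (div_le_div_iff₀ hv (by positivity)).1 h
  nlinarith

/-- Lemma `early-discrete`: total discretization error of the score in the
early-stopping setting, without smoothness assumptions. -/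
theorem statement13 :
    ∃ K : ℝ, 0 < K ∧
      ∀ (d N : ℕ) (T δ : ℝ) (P : Measure (Vec d)) (g : ℝ → ℝ) (tp : ℕ → ℝ),
        IsProbabilityMeasure P → 0 < N →
        ContinuousOn g (Set.Icc 0 T) → (∀ u ∈ Set.Ioc (0 : ℝ) T, 0 < g u) →
        tp 0 = δ → 0 < δ → tp N = T → (∀ k < N, tp k < tp (k + 1)) →
        -- step-size condition `G_k / σ_{t_{k−1}}² ≤ 1/(K·d)`
        (∀ k < N, Gvar g (tp k) (tp (k + 1)) / sigmaSq g (tp k) ≤ 1 / (K * d)) →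
        (∑ k ∈ Finset.range N, ∫ t in tp k..tp (k + 1),
            (g t) ^ 2 *
              ∫ ω, ‖fwdScore d P g t (xt d g t ω) -
                  fwdScore d P g (tp (k + 1)) (xts d g t (tp (k + 1)) ω)‖ ^ 2
                ∂(coupleMeasure d P)) ≤
          K * d ^ 2 * ∑ k ∈ Finset.range N,
            (Gvar g (tp k) (tp (k + 1))) ^ 2 / (sigmaSq g (tp k)) ^ 2 := by
  refine ⟨618, by norm_num, ?_⟩
  intro d N T δ P g tp hP _ hg hpos h_zero hδ hN htp h_step
  have htp_mono : MonotoneOn tp (Set.Icc 0 N) :=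
    monotoneOn_of_le_succ Set.ordConnected_Icc fun k _ _ hk => (htp k (by simpa using hk.2)).le
  rw [Finset.mul_sum]
  refine Finset.sum_le_sum fun k hk => ?_
  have hkN : k < N := Finset.mem_range.1 hk
  have hk_pos : 0 < tp k := by
    rw [← h_zero] at hδ
    exact hδ.trans_le (htp_mono ⟨le_rfl, N.zero_le⟩ ⟨k.zero_le, hkN.le⟩ k.zero_le)
  have hk_le : tp (k + 1) ≤ T := hN ▸ htp_mono ⟨by lia, hkN⟩ ⟨N.zero_le, le_rfl⟩ hkN
  have h_Gvar := Gvar_pos hg hpos hk_pos.le (htp k hkN) hk_le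
  have h_sigmaSq := sigmaSq_pos hg hpos hk_pos ((htp k hkN).le.trans hk_le)
  exact intervalIntegral_sq_mul_fwdScoreIncrementSq_le P hg hpos hk_pos (htp k hkN) hk_le
    (four_mul_succ_mul_le_of_div_le h_Gvar h_sigmaSq (h_step k hkN))

end DiffusionKL
end
end

section
/- Let K ≥ 2, g ≡ 1, 0 < δ < 1, c ≤ 1/(K·d), and let the discretization points t₀ = δ < t₁ < ⋯ < t_N = T be defined by the exponentially decreasing-then-constant step sizes h_k := t_k − t_{k−1} = c·min{t_k, 1}. Then there is a universal constant C > 0 such that G_k/σ_{t_{k−1}}² ≤ C/(K·d) for every k = 1,…,N, the quantity Π := Σ_{k=1}^N G_k²/σ_{t_{k−1}}⁴ satisfies Π ≤ C·c·(log(1/δ) + T), and the number of steps satisfies N ≤ C·(log(1/δ) + T)/c. -/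
open MeasureTheory Real

noncomputable section

namespace DiffusionKL

/-! Since `1 - exp (-t)` is comparable to `min t 1`, which grows by a factor of at most
`1 / (1 - c)` in one step, each ratio `G_k / σ²` is of order `c`. The potential `log t + t` grows by
at least `c` at each step: `log t` does so while `t ≤ 1`, and `t` itself does so afterwards.
Telescoping bounds `N * c`, and then `Π ≤ N * O(c)²`. -/

lemma half_min_one_le_one_sub_exp_neg {x : ℝ} (hx : 0 ≤ x) : min x 1 / 2 ≤ 1 - exp (-x) := by
  have hexp : exp (-x) ≤ 1 / (1 + x) := by
    rw [exp_neg, ← one_div]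
    exact one_div_le_one_div_of_le (by linarith) (by linarith [add_one_le_exp x])
  have hrat : 1 / (1 + x) ≤ 1 - min x 1 / 2 := by
    rw [div_le_iff₀ (by linarith)]
    rcases le_total x 1 with h | h
    · rw [min_eq_left h]; nlinarith
    · rw [min_eq_right h]; linarith
  linarith

/-- Discretization points `0 < t₀, t₁, …, t_N` with the exponentially decreasing-then-constant step
sizes `t_k - t_{k-1} = c * min t_k 1`. Only the values `t k` with `k ≤ N` are constrained. -/
structure IsExpThenConstGrid (c : ℝ) (N : ℕ) (t : ℕ → ℝ) : Prop where
  zero_pos : 0 < t 0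
  sub_pred_eq : ∀ k, 1 ≤ k → k ≤ N → t k - t (k - 1) = c * min (t k) 1

namespace IsExpThenConstGrid

variable {c : ℝ} {N k : ℕ} {t : ℕ → ℝ}

lemma succ_sub_eq (h : IsExpThenConstGrid c N t) (hk : k < N) :
    t (k + 1) - t k = c * min (t (k + 1)) 1 :=
  h.sub_pred_eq (k + 1) (Nat.le_add_left 1 k) hk

lemma pos (h : IsExpThenConstGrid c N t) (hc1 : c ≤ 1) (hk : k ≤ N) : 0 < t k := by
  induction k with
  | zero => exact h.zero_pos
  | succ k ih =>
    have hprev : 0 < t k := ih (by lia)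
    have hstep := h.succ_sub_eq hk
    by_contra! hneg
    rw [min_eq_left (hneg.trans zero_le_one)] at hstep
    nlinarith

lemma le_succ (h : IsExpThenConstGrid c N t) (hc : 0 ≤ c) (hc1 : c ≤ 1) (hk : k < N) :
    t k ≤ t (k + 1) := by
  rw [← sub_nonneg, h.succ_sub_eq hk]
  exact mul_nonneg hc (le_min (h.pos hc1 hk).le zero_le_one)

lemma one_sub_mul_min_succ_le (h : IsExpThenConstGrid c N t) (hc : 0 ≤ c) (hc1 : c ≤ 1)
    (hk : k < N) : (1 - c) * min (t (k + 1)) 1 ≤ min (t k) 1 := by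
  have hstep := h.succ_sub_eq hk
  refine le_min ?_ ?_
  · linarith [min_le_left (t (k + 1)) 1]
  · exact mul_le_one₀ (by linarith) (le_min (h.pos hc1 hk).le zero_le_one) (min_le_right _ _)

lemma one_sub_exp_neg_pos (h : IsExpThenConstGrid c N t) (hc1 : c ≤ 1) (hk : k ≤ N) :
    0 < 1 - exp (-t k) := by
  simpa using h.pos hc1 hk

lemma step_div_nonneg (h : IsExpThenConstGrid c N t) (hc : 0 ≤ c) (hc1 : c ≤ 1) (hk : k < N) :
    0 ≤ (t (k + 1) - t k) / (1 - exp (-t k)) :=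
  div_nonneg (sub_nonneg.2 (h.le_succ hc hc1 hk)) (h.one_sub_exp_neg_pos hc1 hk.le).le

lemma step_div_le (h : IsExpThenConstGrid c N t) (hc : 0 ≤ c) (hc1 : c < 1) (hk : k < N) :
    (t (k + 1) - t k) / (1 - exp (-t k)) ≤ 2 / (1 - c) * c := by
  have hpos : 0 < 1 - c := sub_pos.2 hc1
  rw [div_le_iff₀ (h.one_sub_exp_neg_pos hc1.le hk.le)]
  calc t (k + 1) - t k = c / (1 - c) * ((1 - c) * min (t (k + 1)) 1) := by
        rw [h.succ_sub_eq hk]; field_simp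
    _ ≤ c / (1 - c) * min (t k) 1 := by
        gcongr
        exact h.one_sub_mul_min_succ_le hc hc1.le hk
    _ = 2 / (1 - c) * c * (min (t k) 1 / 2) := by ring
    _ ≤ 2 / (1 - c) * c * (1 - exp (-t k)) := by
        gcongr
        exact half_min_one_le_one_sub_exp_neg (h.pos hc1.le hk.le).le

lemma sum_sq_step_div_le (h : IsExpThenConstGrid c N t) (hc : 0 ≤ c) (hc1 : c < 1) :
    ∑ k ∈ Finset.range N, (t (k + 1) - t k) ^ 2 / (1 - exp (-t k)) ^ 2 ≤
      N * (2 / (1 - c) * c) ^ 2 := by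
  have hterm : ∀ k ∈ Finset.range N,
      (t (k + 1) - t k) ^ 2 / (1 - exp (-t k)) ^ 2 ≤ (2 / (1 - c) * c) ^ 2 := fun k hk => by
    have hkN := Finset.mem_range.1 hk
    rw [← div_pow]
    exact pow_le_pow_left₀ (h.step_div_nonneg hc hc1.le hkN) (h.step_div_le hc hc1 hkN) 2
  simpa using Finset.sum_le_card_nsmul _ _ _ hterm

lemma le_log_add_succ_sub (h : IsExpThenConstGrid c N t) (hc : 0 ≤ c) (hc1 : c ≤ 1) (hk : k < N) :
    c ≤ (log (t (k + 1)) + t (k + 1)) - (log (t k) + t k) := by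
  have hcur : 0 < t k := h.pos hc1 hk.le
  have hnext : 0 < t (k + 1) := h.pos hc1 hk
  have hmono := h.le_succ hc hc1 hk
  have hstep := h.succ_sub_eq hk
  rcases le_total (t (k + 1)) 1 with hle | hge
  · rw [min_eq_left hle] at hstep
    have hlog : c ≤ log (t (k + 1)) - log (t k) :=
      calc c = 1 - (t (k + 1) / t k)⁻¹ := by field_simp; linarith
        _ ≤ log (t (k + 1) / t k) := one_sub_inv_le_log_of_pos (div_pos hnext hcur)
        _ = log (t (k + 1)) - log (t k) := log_div hnext.ne' hcur.ne'
    linarith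
  · rw [min_eq_right hge] at hstep
    linarith [log_le_log hcur hmono]

lemma natCast_mul_le_log_add_sub (h : IsExpThenConstGrid c N t) (hc : 0 ≤ c) (hc1 : c ≤ 1) :
    N * c ≤ (log (t N) + t N) - (log (t 0) + t 0) :=
  calc N * c = ∑ _k ∈ Finset.range N, c := by simp
    _ ≤ ∑ k ∈ Finset.range N, ((log (t (k + 1)) + t (k + 1)) - (log (t k) + t k)) :=
        Finset.sum_le_sum fun _ hk => h.le_log_add_succ_sub hc hc1 (Finset.mem_range.1 hk)
    _ = (log (t N) + t N) - (log (t 0) + t 0) :=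
        Finset.sum_range_sub (fun k => log (t k) + t k) N

lemma natCast_mul_le_two_mul_log_add (h : IsExpThenConstGrid c N t) (hc : 0 ≤ c) (hc1 : c ≤ 1) :
    N * c ≤ 2 * (log (1 / t 0) + t N) := by
  have hlogN := log_le_sub_one_of_pos (h.pos hc1 le_rfl)
  have hlog0 := log_le_sub_one_of_pos h.zero_pos
  rw [one_div, log_inv]
  linarith [h.natCast_mul_le_log_add_sub hc hc1]

end IsExpThenConstGrid

theorem statement15_general {c₀ : ℝ} (hc₀ : c₀ < 1) :
    ∃ C : ℝ, 0 < C ∧ ∀ (N : ℕ) (c : ℝ) (t : ℕ → ℝ),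
      0 < c → c ≤ c₀ → IsExpThenConstGrid c N t →
      (∀ k, 1 ≤ k → k ≤ N → (t k - t (k - 1)) / (1 - exp (-t (k - 1))) ≤ C * c) ∧
      ∑ k ∈ Finset.range N, (t (k + 1) - t k) ^ 2 / (1 - exp (-t k)) ^ 2 ≤
        C * c * (log (1 / t 0) + t N) ∧
      N ≤ C * (log (1 / t 0) + t N) / c := by
  set q : ℝ := 2 / (1 - c₀)
  have hq : 0 < q := div_pos two_pos (sub_pos.2 hc₀)
  refine ⟨2 * q ^ 2, by positivity, fun N c t hc hcc₀ h => ?_⟩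
  have hc1 : c < 1 := hcc₀.trans_lt hc₀
  have hfactor : 2 / (1 - c) ≤ q :=
    div_le_div_of_nonneg_left zero_le_two (by linarith) (by linarith)
  have hq1 : 1 ≤ q := (one_le_div (by linarith)).2 (by linarith)
  have hq_sq : q ≤ 2 * q ^ 2 := by nlinarith
  have : 0 < 1 - c := sub_pos.2 hc1
  have hsteps : N * c ≤ 2 * (log (1 / t 0) + t N) :=
    h.natCast_mul_le_two_mul_log_add hc.le hc1.le
  refine ⟨fun k hk hkN => ?_, ?_, ?_⟩
  · calc (t k - t (k - 1)) / (1 - exp (-t (k - 1))) ≤ 2 / (1 - c) * c := by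
          simpa only [Nat.sub_add_cancel hk] using
            h.step_div_le hc.le hc1 (k := k - 1) (by lia)
      _ ≤ 2 * q ^ 2 * c := by gcongr; exact hfactor.trans hq_sq
  · calc ∑ k ∈ Finset.range N, (t (k + 1) - t k) ^ 2 / (1 - exp (-t k)) ^ 2
        ≤ N * (2 / (1 - c) * c) ^ 2 := h.sum_sq_step_div_le hc.le hc1
      _ ≤ N * (q * c) ^ 2 := by gcongr
      _ = q ^ 2 * c * (N * c) := by ring
      _ ≤ q ^ 2 * c * (2 * (log (1 / t 0) + t N)) := by gcongr
      _ = 2 * q ^ 2 * c * (log (1 / t 0) + t N) := by ring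
  · rw [le_div_iff₀ hc]
    calc N * c ≤ q ^ 2 * (N * c) := le_mul_of_one_le_left (by positivity) (one_le_pow₀ hq1)
      _ ≤ q ^ 2 * (2 * (log (1 / t 0) + t N)) := by gcongr
      _ = 2 * q ^ 2 * (log (1 / t 0) + t N) := by ring

/-- Lemma `quant-exp`: quantitative bounds for the constant variance
function `g ≡ 1` with exponentially-decreasing-then-constant step sizes
`h_k = c·min{t_k, 1}`. With `g ≡ 1` we have `G_k = t_k − t_{k−1}` and
`σ_t² = 1 − e^{−t}`. -/
theorem statement15 :
    ∃ C : ℝ, 0 < C ∧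
      ∀ (K : ℝ) (d N : ℕ) (c δ T : ℝ) (tp : ℕ → ℝ),
        2 ≤ K → 0 < d → 0 < N →
        0 < c → c ≤ 1 / (K * d) →
        0 < δ → δ < 1 →
        tp 0 = δ → tp N = T →
        (∀ k, 1 ≤ k → k ≤ N → tp k - tp (k - 1) = c * min (tp k) 1) →
        -- `G_k / σ_{t_{k−1}}² ≤ C/(K·d)` for every `k = 1, …, N`
        (∀ k, 1 ≤ k → k ≤ N →
          (tp k - tp (k - 1)) / (1 - Real.exp (-(tp (k - 1)))) ≤ C / (K * d)) ∧
        -- `Π = Σ_{k=1}^N G_k²/σ_{t_{k−1}}⁴ ≤ C·c·(log(1/δ) + T)`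
        (∑ k ∈ Finset.range N,
            (tp (k + 1) - tp k) ^ 2 / (1 - Real.exp (-(tp k))) ^ 2) ≤
          C * c * (Real.log (1 / δ) + T) ∧
        -- the number of steps satisfies `N ≤ C·(log(1/δ) + T)/c`
        (N : ℝ) ≤ C * (Real.log (1 / δ) + T) / c := by
  obtain ⟨C, hC, hgrid⟩ := statement15_general one_half_lt_one
  refine ⟨C, hC, ?_⟩
  rintro K d N c _ _ t hK hd - hc hcK hδ - rfl rfl hstep
  have hKd : 2 ≤ K * d :=
    hK.trans (le_mul_of_one_le_right (by linarith) (by exact_mod_cast hd))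
  obtain ⟨hratio, hbounds⟩ :=
    hgrid N c t hc (hcK.trans (one_div_le_one_div_of_le two_pos hKd)) ⟨hδ, hstep⟩
  refine ⟨fun k hk hkN => (hratio k hk hkN).trans ?_, hbounds⟩
  simpa only [mul_one_div] using mul_le_mul_of_nonneg_left hcK hC.le

end DiffusionKL
end
end

section
/- Let P be a probability measure on ℝ^d, μ ≠ 0 and σ > 0, and let p_{μ,σ} be the density of μY + σZ where Y ∼ P and Z ∼ N(0,I_d) are independent, i.e., p_{μ,σ}(x) = (2πσ²)^{−d/2}∫ exp(−‖x−μy‖²/(2σ²)) dP(y). Let P̃_{μ,σ}(·|x) be the probability measure with dP̃_{μ,σ}(y|x) ∝ exp(−‖x−μy‖²/(2σ²)) dP(y). Then: (1) for every x ∈ ℝ^d, ∇log p_{μ,σ}(x) = E_{y∼P̃_{μ,σ}(·|x)}[(μy − x)/σ²]; and (2) if moreover P admits a density p ∈ C¹(ℝ^d) (with the integration by parts justified, e.g. p and ∇p integrable against the Gaussian kernel), then ∇log p_{μ,σ}(x) = (1/μ)·E_{y∼P̃_{μ,σ}(·|x)}[∇log p(y)]. -/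
open MeasureTheory Real

noncomputable section

namespace DiffusionKL

open Filter Topology Gradient

/-! Writing `k(x, y) = exp (-‖x - μ y‖² / (2σ²))`, the first formula is Fisher's identity: the
gradient of `log ∫ exp (F x y) dP(y)` is the mean of `∇ₓ F` under `P` tilted by `F x`. If `P` has
density `p`, the tilted measure has density `q ∝ p · k(x, ·)`, and scores have mean zero:
`E_q[∇ log q] = 0`. As `∇_y log k = -μ ∇ₓ log k`, this turns the first formula into the second.

A density is only required to represent the measure, so it may take negative values. The mean-zero
property therefore says that `∇ q` integrates to zero over `{0 < q}`; it is obtained by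
integrating the gradient of `φ(n q) / n`, where `φ` is a smooth version of the positive part. -/

section SmoothRamp

/-- A smooth version of the positive part, whose derivative is `Real.smoothTransition`. -/
def smoothRamp (t : ℝ) : ℝ := ∫ u in 0..t, smoothTransition u

lemma hasDerivAt_smoothRamp (t : ℝ) : HasDerivAt smoothRamp (smoothTransition t) t :=
  (smoothTransition.continuous.integral_hasStrictDerivAt 0 t).hasDerivAt

lemma smoothRamp_of_nonpos {t : ℝ} (ht : t ≤ 0) : smoothRamp t = 0 := by
  refine intervalIntegral.integral_zero_ae (ae_of_all _ fun u hu => ?_)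
  rw [Set.uIoc_of_ge ht] at hu
  exact smoothTransition.zero_of_nonpos hu.2

lemma norm_smoothTransition_le_one (t : ℝ) : ‖smoothTransition t‖ ≤ 1 := by
  rw [Real.norm_of_nonneg (smoothTransition.nonneg t)]
  exact smoothTransition.le_one t

lemma norm_smoothRamp_le (t : ℝ) : ‖smoothRamp t‖ ≤ ‖t‖ := by
  simpa [smoothRamp] using intervalIntegral.norm_integral_le_of_norm_le_const (a := 0) (b := t)
    fun u _ => norm_smoothTransition_le_one u

lemma tendsto_smoothTransition_natCast_mul {t : ℝ} (ht : 0 < t) :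
    Tendsto (fun n : ℕ => smoothTransition (n * t)) atTop (𝓝 1) := by
  refine tendsto_const_nhds.congr' ?_
  filter_upwards [(tendsto_natCast_atTop_atTop.atTop_mul_const ht).eventually_ge_atTop 1]
    with n hn using (smoothTransition.one_of_one_le hn).symm

end SmoothRamp

section PositivitySet

variable {E : Type*} [NormedAddCommGroup E] [NormedSpace ℝ E] [FiniteDimensional ℝ E]
  [MeasurableSpace E] [BorelSpace E] {ν : Measure E} [ν.IsAddHaarMeasure] {q : E → ℝ}

lemma setIntegral_smoothTransition_mul_fderiv_eq_zero (hq : Differentiable ℝ q) {v : E}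
    (hqi : IntegrableOn q {y | 0 < q y} ν)
    (hqv : IntegrableOn (fun y => fderiv ℝ q y v) {y | 0 < q y} ν) :
    ∫ y in {y | 0 < q y}, smoothTransition (q y) * fderiv ℝ q y v ∂ν = 0 := by
  have hramp (y : E) : HasFDerivAt (fun z => smoothRamp (q z))
      (smoothTransition (q y) • fderiv ℝ q y) y :=
    (hasDerivAt_smoothRamp (q y)).comp_hasFDerivAt y (hq y).hasFDerivAt
  have hramp_cont : Continuous fun y => smoothRamp (q y) :=
    continuous_iff_continuousAt.2 fun y => (hramp y).continuousAt
  have hramp_int : Integrable (fun y => smoothRamp (q y)) ν := by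
    refine (integrableOn_iff_integrable_of_support_subset fun y hy => ?_).1
      (Integrable.mono hqi hramp_cont.aestronglyMeasurable
        (ae_of_all _ fun y => norm_smoothRamp_le (q y)))
    by_contra hy'
    exact hy (smoothRamp_of_nonpos (not_lt.1 hy'))
  have hderiv_zero (y : E) (hy : y ∉ {y | 0 < q y}) :
      smoothTransition (q y) * fderiv ℝ q y v = 0 := by
    rw [smoothTransition.zero_of_nonpos (not_lt.1 hy), zero_mul]
  have hderiv_int : Integrable (fun y => smoothTransition (q y) * fderiv ℝ q y v) ν := by
    refine (integrableOn_iff_integrable_of_support_subset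
      (Function.support_subset_iff'.2 hderiv_zero)).1
      (hqv.bdd_mul (c := 1) ?_ (ae_of_all _ fun y => norm_smoothTransition_le_one (q y)))
    exact (smoothTransition.continuous.comp hq.continuous).aestronglyMeasurable
  rw [setIntegral_eq_integral_of_forall_compl_eq_zero hderiv_zero]
  simpa [(hramp _).fderiv] using integral_mul_fderiv_eq_neg_fderiv_mul_of_integrable (μ := ν)
    (f := fun _ => (1 : ℝ)) (g := fun y => smoothRamp (q y)) (v := v) (by simp)
    (by simpa [(hramp _).fderiv] using hderiv_int) (by simpa using hramp_int)
    (fun _ _ => differentiableAt_const _) (fun y _ => (hramp y).differentiableAt)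

lemma setIntegral_fderiv_apply_pos_eq_zero (hq : Differentiable ℝ q) {v : E}
    (hqi : IntegrableOn q {y | 0 < q y} ν)
    (hqv : IntegrableOn (fun y => fderiv ℝ q y v) {y | 0 < q y} ν) :
    ∫ y in {y | 0 < q y}, fderiv ℝ q y v ∂ν = 0 := by
  have hpos : MeasurableSet {y | 0 < q y} :=
    (isOpen_lt continuous_const hq.continuous).measurableSet
  have hlim : Tendsto
      (fun n : ℕ => ∫ y in {y | 0 < q y}, smoothTransition (n * q y) * fderiv ℝ q y v ∂ν)
      atTop (𝓝 (∫ y in {y | 0 < q y}, fderiv ℝ q y v ∂ν)) := by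
    refine tendsto_integral_of_dominated_convergence (fun y => ‖fderiv ℝ q y v‖) (fun n => ?_)
      hqv.norm (fun n => ae_of_all _ fun y => ?_) ((ae_restrict_mem hpos).mono fun y hy => ?_)
    · exact (smoothTransition.continuous.comp
        (continuous_const.mul hq.continuous)).aestronglyMeasurable.mul hqv.aestronglyMeasurable
    · rw [norm_mul]
      exact mul_le_of_le_one_left (norm_nonneg _) (norm_smoothTransition_le_one _)
    · simpa using (tendsto_smoothTransition_natCast_mul hy).mul_const (fderiv ℝ q y v)
  have hzero (n : ℕ) (hn : 0 < n) :
      ∫ y in {y | 0 < q y}, smoothTransition (n * q y) * fderiv ℝ q y v ∂ν = 0 := by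
    have hn' : (0 : ℝ) < n := Nat.cast_pos.2 hn
    have hset : {y | 0 < n * q y} = {y | 0 < q y} := by simp only [mul_pos_iff_of_pos_left hn']
    have hfderiv (y : E) : fderiv ℝ (fun z => n * q z) y v = n * fderiv ℝ q y v := by
      rw [fderiv_const_mul (hq y), _root_.smul_apply, smul_eq_mul]
    have := setIntegral_smoothTransition_mul_fderiv_eq_zero (ν := ν) (hq.const_mul (n : ℝ)) (v := v)
      (by rw [hset]; exact hqi.const_mul _)
      (by simp only [hset, hfderiv]; exact hqv.const_mul _)
    simpa [hset, hfderiv, mul_left_comm _ (n : ℝ), integral_const_mul, hn'.ne'] using this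
  refine tendsto_nhds_unique hlim (tendsto_const_nhds.congr' ?_)
  filter_upwards [eventually_gt_atTop 0] with n hn using (hzero n hn).symm

end PositivitySet

section Gradient

variable {E : Type*} [NormedAddCommGroup E] [InnerProductSpace ℝ E] [CompleteSpace E]
  {f : E → ℝ} {f' x : E}

lemma hasGradientAt_exp_comp (hf : HasGradientAt f f' x) :
    HasGradientAt (fun z => exp (f z)) (exp (f x) • f') x := by
  rw [hasGradientAt_iff_hasFDerivAt, map_smul]
  exact hf.hasFDerivAt.exp

lemma hasGradientAt_log_comp (hf : HasGradientAt f f' x) (hx : f x ≠ 0) :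
    HasGradientAt (fun z => log (f z)) ((f x)⁻¹ • f') x := by
  rw [hasGradientAt_iff_hasFDerivAt, map_smul]
  exact hf.hasFDerivAt.log hx

lemma gradient_log_mul_exp_div {p : E → ℝ} {c : ℝ} (hp : DifferentiableAt ℝ p x) (hx : p x ≠ 0)
    (hf : DifferentiableAt ℝ f x) (hc : c ≠ 0) :
    ∇ (fun z => log (p z * (exp (f z) / c))) x = ∇ (fun z => log (p z)) x + ∇ f x := by
  have hlog : (fun z => log (p z * (exp (f z) / c))) =ᶠ[𝓝 x]
      fun z => log (p z) + f z - log c := by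
    filter_upwards [hp.continuousAt.eventually_ne hx] with z hz
    rw [log_mul hz (by positivity), log_div (exp_ne_zero _) hc, log_exp, add_sub_assoc]
  rw [hlog.gradient_eq, gradient, fderiv_sub_const, fderiv_fun_add (hp.log hx) hf, map_add]
  rfl

end Gradient

section FisherIdentity

variable {α E : Type*} [MeasurableSpace α] [NormedAddCommGroup E] [InnerProductSpace ℝ E]
  [CompleteSpace E] {P : Measure α}

theorem hasGradientAt_integral_of_dominated_of_gradient_le {F : E → α → ℝ} {F' : E → α → E}
    {x : E} {s : Set E} {bound : α → ℝ} (hs : s ∈ 𝓝 x)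
    (hF_meas : ∀ᶠ z in 𝓝 x, AEStronglyMeasurable (F z) P) (hF_int : Integrable (F x) P)
    (hF'_meas : AEStronglyMeasurable (F' x) P)
    (h_bound : ∀ᵐ a ∂P, ∀ z ∈ s, ‖F' z a‖ ≤ bound a) (bound_integrable : Integrable bound P)
    (h_diff : ∀ᵐ a ∂P, ∀ z ∈ s, HasGradientAt (F · a) (F' z a) z) :
    HasGradientAt (fun z => ∫ a, F z a ∂P) (∫ a, F' x a ∂P) x := by
  have hderiv := hasFDerivAt_integral_of_dominated_of_fderiv_le
    (F' := fun z a => innerSL ℝ (F' z a)) hs hF_meas hF_int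
    ((innerSL ℝ).continuous.comp_aestronglyMeasurable hF'_meas)
    (by simpa only [innerSL_apply_norm] using h_bound) bound_integrable h_diff
  have hF'_int : Integrable (F' x) P :=
    bound_integrable.mono' hF'_meas (h_bound.mono fun a ha => ha x (mem_of_mem_nhds hs))
  exact hderiv.congr_fderiv ((innerSL ℝ).integral_comp_comm hF'_int)

/-- **Fisher's identity** for exponential weights. -/
theorem hasGradientAt_log_integral_exp [NeZero P] {F : E → α → ℝ} {F' : E → α → E}
    {x : E} {s : Set E} {bound : α → ℝ} (hs : s ∈ 𝓝 x)
    (hF_meas : ∀ᶠ z in 𝓝 x, AEStronglyMeasurable (fun a => exp (F z a)) P)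
    (hF_int : Integrable (fun a => exp (F x a)) P) (hF'_meas : AEStronglyMeasurable (F' x) P)
    (h_bound : ∀ᵐ a ∂P, ∀ z ∈ s, ‖exp (F z a) • F' z a‖ ≤ bound a)
    (bound_integrable : Integrable bound P)
    (h_diff : ∀ᵐ a ∂P, ∀ z ∈ s, HasGradientAt (F · a) (F' z a) z) :
    HasGradientAt (fun z => log (∫ a, exp (F z a) ∂P)) (∫ a, F' x a ∂P.tilted (F x)) x := by
  have hgrad := hasGradientAt_integral_of_dominated_of_gradient_le hs hF_meas hF_int
    (hF_int.aestronglyMeasurable.smul hF'_meas) h_bound bound_integrable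
    (h_diff.mono fun a ha z hz => hasGradientAt_exp_comp (ha z hz))
  have hmean : ∫ a, F' x a ∂P.tilted (F x) =
      (∫ a, exp (F x a) ∂P)⁻¹ • ∫ a, exp (F x a) • F' x a ∂P := by
    simp only [integral_tilted, div_eq_inv_mul, mul_smul, integral_smul]
  rw [hmean]
  exact hasGradientAt_log_comp hgrad (integral_exp_pos hF_int).ne'

end FisherIdentity

section Tilted

variable {α : Type*} [MeasurableSpace α] {P : Measure α} {f : α → ℝ}

lemma tilted_eq_inv_smul_withDensity [NeZero P] (hf : Integrable (fun y => exp (f y)) P) :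
    P.tilted f = ((P.withDensity fun y => ENNReal.ofReal (exp (f y))) Set.univ)⁻¹ •
      P.withDensity fun y => ENNReal.ofReal (exp (f y)) := by
  have hZ : 0 < ∫ y, exp (f y) ∂P := integral_exp_pos hf
  have hmass : (P.withDensity fun y => ENNReal.ofReal (exp (f y))) Set.univ =
      ENNReal.ofReal (∫ y, exp (f y) ∂P) := by
    rw [withDensity_apply _ MeasurableSet.univ, setLIntegral_univ,
      ofReal_integral_eq_lintegral_ofReal hf (ae_of_all _ fun y => (exp_pos _).le)]
  rw [hmass, ← withDensity_smul' _ _ (by simpa using hZ), Measure.tilted]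
  congr 1 with y
  rw [ENNReal.ofReal_div_of_pos hZ, Pi.smul_apply, smul_eq_mul, ENNReal.div_eq_inv_mul]

end Tilted

section WithDensityOfReal

variable {α : Type*} [MeasurableSpace α] {ν : Measure α} {p f : α → ℝ}

lemma integrableOn_pos_of_isFiniteMeasure_withDensity (hp : Measurable p)
    [IsFiniteMeasure (ν.withDensity fun y => ENNReal.ofReal (p y))] :
    IntegrableOn p {y | 0 < p y} ν := by
  have hpos : MeasurableSet {y | 0 < p y} := measurableSet_lt measurable_const hp
  refine ⟨hp.aestronglyMeasurable, ?_⟩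
  rw [hasFiniteIntegral_iff_ofReal ((ae_restrict_mem hpos).mono fun y hy => le_of_lt hy),
    ← withDensity_apply _ hpos]
  exact measure_lt_top _ _

lemma withDensity_ofReal_tilted (hp : Measurable p) (hf : Measurable f) :
    (ν.withDensity fun y => ENNReal.ofReal (p y)).tilted f =
      ν.withDensity fun y => ENNReal.ofReal
        (p y * (exp (f y) / ∫ z, exp (f z) ∂ν.withDensity fun y => ENNReal.ofReal (p y))) := by
  rw [Measure.tilted, ← withDensity_mul _ hp.ennreal_ofReal (by fun_prop)]
  congr 1 with y
  rw [Pi.mul_apply, ENNReal.ofReal_mul' (by positivity)]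

end WithDensityOfReal

section MeanZeroScore

variable {E : Type*} [NormedAddCommGroup E] [InnerProductSpace ℝ E] [FiniteDimensional ℝ E]

lemma toReal_ofReal_smul_gradient_log {q : E → ℝ} (hq : Differentiable ℝ q) (y : E) :
    (ENNReal.ofReal (q y)).toReal • ∇ (fun z => log (q z)) y =
      {y | 0 < q y}.indicator (∇ q) y := by
  rcases le_or_gt (q y) 0 with hy | hy
  · rw [ENNReal.ofReal_of_nonpos hy, ENNReal.toReal_zero, zero_smul,
      Set.indicator_of_notMem (by simpa using hy)]
  · rw [ENNReal.toReal_ofReal hy.le, Set.indicator_of_mem (by exact hy),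
      (hasGradientAt_log_comp (hq y).hasGradientAt hy.ne').gradient, smul_inv_smul₀ hy.ne']

variable [MeasurableSpace E] [BorelSpace E] {ν : Measure E} [ν.IsAddHaarMeasure]

lemma setIntegral_gradient_pos_eq_zero {q : E → ℝ} (hq : Differentiable ℝ q)
    (hqi : IntegrableOn q {y | 0 < q y} ν) (hq' : IntegrableOn (∇ q) {y | 0 < q y} ν) :
    ∫ y in {y | 0 < q y}, ∇ q y ∂ν = 0 := by
  refine ext_inner_left ℝ fun v => ?_
  have hqv := hq'.const_inner (𝕜 := ℝ) v
  rw [← integral_inner hq', inner_zero_right]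
  simp only [inner_gradient_right, RCLike.conj_to_real] at hqv ⊢
  exact setIntegral_fderiv_apply_pos_eq_zero hq hqi hqv

theorem integral_gradient_log_withDensity_eq_zero {q : E → ℝ} (hq : Differentiable ℝ q)
    [IsFiniteMeasure (ν.withDensity fun y => ENNReal.ofReal (q y))]
    (hscore : Integrable (∇ fun z => log (q z)) (ν.withDensity fun y => ENNReal.ofReal (q y))) :
    ∫ y, ∇ (fun z => log (q z)) y ∂ν.withDensity (fun y => ENNReal.ofReal (q y)) = 0 := by
  have hpos : MeasurableSet {y | 0 < q y} :=
    (isOpen_lt continuous_const hq.continuous).measurableSet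
  have hdens : Measurable fun y => ENNReal.ofReal (q y) :=
    hq.continuous.measurable.ennreal_ofReal
  have hfin : ∀ᵐ y ∂ν, ENNReal.ofReal (q y) < ⊤ := ae_of_all _ fun _ => ENNReal.ofReal_lt_top
  rw [integrable_withDensity_iff_integrable_smul' hdens hfin] at hscore
  rw [integral_withDensity_eq_integral_toReal_smul hdens hfin]
  simp only [toReal_ofReal_smul_gradient_log hq] at hscore ⊢
  rw [integrable_indicator_iff hpos] at hscore
  rw [integral_indicator hpos]
  exact setIntegral_gradient_pos_eq_zero hq
    (integrableOn_pos_of_isFiniteMeasure_withDensity hq.continuous.measurable) hscore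

theorem integral_gradient_log_tilted_eq_neg {P : Measure E} [NeZero P] {p f : E → ℝ}
    (hP : P = ν.withDensity fun y => ENNReal.ofReal (p y)) (hp : Differentiable ℝ p)
    (hf : Differentiable ℝ f) (hexp : Integrable (fun y => exp (f y)) P)
    (hscore : Integrable (∇ fun z => log (p z)) (P.tilted f))
    (hgrad : Integrable (∇ f) (P.tilted f)) :
    ∫ y, ∇ (fun z => log (p z)) y ∂P.tilted f = -∫ y, ∇ f y ∂P.tilted f := by
  let q (y : E) : ℝ := p y * (exp (f y) / ∫ z, exp (f z) ∂P)
  have hZ : 0 < ∫ z, exp (f z) ∂P := integral_exp_pos hexp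
  have hq : Differentiable ℝ q := hp.mul (hf.exp.mul_const _)
  have htilt : P.tilted f = ν.withDensity fun y => ENNReal.ofReal (q y) := by
    subst hP
    exact withDensity_ofReal_tilted hp.continuous.measurable hf.continuous.measurable
  have hlog : ∀ᵐ y ∂P.tilted f,
      ∇ (fun z => log (q z)) y = ∇ (fun z => log (p z)) y + ∇ f y := by
    rw [htilt, ae_withDensity_iff hq.continuous.measurable.ennreal_ofReal]
    refine ae_of_all _ fun y hy => gradient_log_mul_exp_div (hp y) ?_ (hf y) hZ.ne'
    intro hpy
    simp [q, hpy] at hy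
  have hfin : IsFiniteMeasure (ν.withDensity fun y => ENNReal.ofReal (q y)) :=
    htilt ▸ inferInstance
  have hmean := integral_gradient_log_withDensity_eq_zero hq
    (htilt ▸ (hscore.add hgrad).congr (hlog.mono fun _ h => h.symm))
  rw [← htilt, integral_congr_ae hlog, integral_add hscore hgrad] at hmean
  exact eq_neg_of_add_eq_zero_left hmean

end MeanZeroScore

section GaussianKernel

variable {E : Type*} [NormedAddCommGroup E] [InnerProductSpace ℝ E] {μ σ : ℝ}

/-- The logarithm of the Gaussian kernel `exp (-‖x - μ y‖² / (2σ²))`, without its normalizing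
constant. -/
def logGaussianKernel (μ σ : ℝ) (x y : E) : ℝ := -‖x - μ • y‖ ^ 2 / (2 * σ ^ 2)

lemma logGaussianKernel_nonpos (x y : E) : logGaussianKernel μ σ x y ≤ 0 :=
  div_nonpos_of_nonpos_of_nonneg (by simp) (by positivity)

lemma continuous_logGaussianKernel (x : E) : Continuous (logGaussianKernel μ σ x) := by
  unfold logGaussianKernel
  fun_prop

lemma hasFDerivAt_neg_norm_sq_div (z : E) :
    HasFDerivAt (fun w : E => -‖w‖ ^ 2 / (2 * σ ^ 2)) (innerSL ℝ (-(σ ^ 2)⁻¹ • z)) z := by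
  simp only [div_eq_mul_inv]
  refine ((hasFDerivAt_id z).norm_sq.neg.mul_const _).congr_fderiv ?_
  ext v
  simp only [mul_inv_rev, id_eq, ContinuousLinearMap.comp_id, smul_neg, neg_apply, smul_apply,
    coe_innerSL_apply, nsmul_eq_mul, Nat.cast_ofNat, smul_eq_mul, neg_smul, map_neg, map_smul,
    neg_inj]
  ring

lemma mul_exp_neg_sq_div_two_le_one (t : ℝ) : t * exp (-t ^ 2 / 2) ≤ 1 := by
  have ht : t ≤ exp (t ^ 2 / 2) := by
    nlinarith [add_one_le_exp (t ^ 2 / 2), sq_nonneg (t - 1)]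
  rwa [neg_div, exp_neg, ← div_eq_mul_inv, div_le_one (exp_pos _)]

lemma norm_exp_logGaussianKernel_smul_le (x y : E) :
    ‖exp (logGaussianKernel μ σ x y) • (σ ^ 2)⁻¹ • (μ • y - x)‖ ≤ |σ|⁻¹ := by
  have hkernel : logGaussianKernel μ σ x y = -(‖x - μ • y‖ / |σ|) ^ 2 / 2 := by
    rw [logGaussianKernel, div_pow, sq_abs]
    ring
  calc ‖exp (logGaussianKernel μ σ x y) • (σ ^ 2)⁻¹ • (μ • y - x)‖
      = |σ|⁻¹ * (‖x - μ • y‖ / |σ| * exp (-(‖x - μ • y‖ / |σ|) ^ 2 / 2)) := by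
        rw [norm_smul, norm_smul, norm_sub_rev, hkernel, Real.norm_of_nonneg (exp_pos _).le,
          Real.norm_of_nonneg (by positivity), ← sq_abs σ]
        ring
    _ ≤ |σ|⁻¹ * 1 := by
        gcongr
        exact mul_exp_neg_sq_div_two_le_one _
    _ = |σ|⁻¹ := mul_one _

section Gradient

variable [CompleteSpace E]

lemma hasGradientAt_logGaussianKernel_left (x y : E) :
    HasGradientAt (fun z => logGaussianKernel μ σ z y) ((σ ^ 2)⁻¹ • (μ • y - x)) x := by
  rw [hasGradientAt_iff_hasFDerivAt]
  refine ((hasFDerivAt_neg_norm_sq_div (x - μ • y)).comp x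
    ((hasFDerivAt_id x).sub_const (μ • y))).congr_fderiv ?_
  ext v
  simp only [neg_smul, map_neg, map_smul, map_sub, ContinuousLinearMap.comp_id, neg_apply,
    smul_apply, sub_apply, coe_innerSL_apply, smul_eq_mul, InnerProductSpace.toDual_apply_apply]
  ring

lemma hasGradientAt_logGaussianKernel_right (x y : E) :
    HasGradientAt (logGaussianKernel μ σ x) (-μ • (σ ^ 2)⁻¹ • (μ • y - x)) y := by
  rw [hasGradientAt_iff_hasFDerivAt]
  refine ((hasFDerivAt_neg_norm_sq_div (x - μ • y)).comp y
    (((hasFDerivAt_id y).const_smul μ).const_sub x)).congr_fderiv ?_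
  ext v
  simp only [neg_smul, map_neg, map_smul, map_sub, ContinuousLinearMap.comp_neg,
    ContinuousLinearMap.comp_smulₛₗ, ringHom_apply, ContinuousLinearMap.comp_id, smul_neg, neg_neg,
    smul_apply, sub_apply, coe_innerSL_apply, smul_eq_mul, neg_apply,
    InnerProductSpace.toDual_apply_apply]
  ring

end Gradient

variable [MeasurableSpace E] [BorelSpace E] {P : Measure E} [IsFiniteMeasure P]

lemma integrable_exp_logGaussianKernel (x : E) :
    Integrable (fun y => exp (logGaussianKernel μ σ x y)) P := by
  refine Integrable.of_bound
    (continuous_exp.comp (continuous_logGaussianKernel x)).aestronglyMeasurable 1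
    (ae_of_all _ fun y => ?_)
  rw [Real.norm_of_nonneg (exp_pos _).le]
  exact exp_le_one_iff.2 (logGaussianKernel_nonpos x y)

variable [SecondCountableTopology E]

lemma integrable_tilted_logGaussianKernel (x : E) :
    Integrable (fun y => (σ ^ 2)⁻¹ • (μ • y - x)) (P.tilted (logGaussianKernel μ σ x)) := by
  have hcont := continuous_logGaussianKernel (μ := μ) (σ := σ) x
  rw [integrable_tilted_iff (integrable_exp_logGaussianKernel x)]
  exact Integrable.of_bound (by fun_prop) _
    (ae_of_all _ fun y => norm_exp_logGaussianKernel_smul_le x y)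

theorem hasGradientAt_log_integral_exp_logGaussianKernel [CompleteSpace E] [NeZero P] (x : E) :
    HasGradientAt (fun z => log (∫ y, exp (logGaussianKernel μ σ z y) ∂P))
      (∫ y, (σ ^ 2)⁻¹ • (μ • y - x) ∂P.tilted (logGaussianKernel μ σ x)) x :=
  hasGradientAt_log_integral_exp (F' := fun z y => (σ ^ 2)⁻¹ • (μ • y - z)) univ_mem
    (Eventually.of_forall fun z => (integrable_exp_logGaussianKernel z).aestronglyMeasurable)
    (integrable_exp_logGaussianKernel x) (by fun_prop)
    (ae_of_all _ fun y z _ => norm_exp_logGaussianKernel_smul_le z y) (integrable_const _)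
    (ae_of_all _ fun y z _ => hasGradientAt_logGaussianKernel_left z y)

end GaussianKernel

section GaussianSmoothing

variable {E : Type*} [NormedAddCommGroup E] [InnerProductSpace ℝ E] [MeasurableSpace E]

/-- The density of `μ Y + σ Z`, where `Y ∼ P` and `Z` is an independent standard Gaussian vector
of `E`; it generalizes `perturbDensity'` to Euclidean spaces without preferred coordinates. -/
def gaussianSmoothing (P : Measure E) (μ σ : ℝ) (x : E) : ℝ :=
  (2 * π * σ ^ 2) ^ (-(Module.finrank ℝ E : ℝ) / 2) * ∫ y, exp (logGaussianKernel μ σ x y) ∂P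

lemma gaussianSmoothing_euclideanSpace (d : ℕ) (P : Measure (Vec d)) (μ σ : ℝ) :
    gaussianSmoothing P μ σ = perturbDensity' d P μ σ := by
  ext x
  rw [gaussianSmoothing, finrank_euclideanSpace_fin]
  rfl

lemma tiltMeasure_eq_tilted (d : ℕ) (P : Measure (Vec d)) [IsFiniteMeasure P] [NeZero P]
    (μ σ : ℝ) (x : Vec d) : tiltMeasure d P μ σ x = P.tilted (logGaussianKernel μ σ x) :=
  (tilted_eq_inv_smul_withDensity (integrable_exp_logGaussianKernel x)).symm

variable [FiniteDimensional ℝ E] [BorelSpace E] (P : Measure E) [IsFiniteMeasure P] [NeZero P]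

theorem hasGradientAt_log_gaussianSmoothing {σ : ℝ} (hσ : σ ≠ 0) (μ : ℝ) (x : E) :
    HasGradientAt (fun z => log (gaussianSmoothing P μ σ z))
      (∫ y, (σ ^ 2)⁻¹ • (μ • y - x) ∂P.tilted (logGaussianKernel μ σ x)) x := by
  have hconst : 0 < (2 * π * σ ^ 2) ^ (-(Module.finrank ℝ E : ℝ) / 2) := by positivity
  have hlog (z : E) : log (gaussianSmoothing P μ σ z) =
      log ((2 * π * σ ^ 2) ^ (-(Module.finrank ℝ E : ℝ) / 2)) +
        log (∫ y, exp (logGaussianKernel μ σ z y) ∂P) :=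
    log_mul hconst.ne' (integral_exp_pos (integrable_exp_logGaussianKernel z)).ne'
  simp only [hlog]
  exact (hasGradientAt_log_integral_exp_logGaussianKernel x).hasFDerivAt.const_add _

theorem statement16_general {σ : ℝ} (hσ : σ ≠ 0) (μ : ℝ) (x : E) :
    HasGradientAt (fun z => log (gaussianSmoothing P μ σ z))
      (∫ y, (σ ^ 2)⁻¹ • (μ • y - x) ∂P.tilted (logGaussianKernel μ σ x)) x ∧
    ∀ (ν : Measure E) [ν.IsAddHaarMeasure] (p : E → ℝ), μ ≠ 0 →
      P = ν.withDensity (fun y => ENNReal.ofReal (p y)) → Differentiable ℝ p →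
      Integrable (∇ fun z => log (p z)) (P.tilted (logGaussianKernel μ σ x)) →
      HasGradientAt (fun z => log (gaussianSmoothing P μ σ z))
        (μ⁻¹ • ∫ y, ∇ (fun z => log (p z)) y ∂P.tilted (logGaussianKernel μ σ x)) x := by
  have hfisher := hasGradientAt_log_gaussianSmoothing P hσ μ x
  refine ⟨hfisher, fun ν _ p hμ hP hp hscore => ?_⟩
  have hgrad : ∇ (logGaussianKernel μ σ x) = fun y => -μ • (σ ^ 2)⁻¹ • (μ • y - x) :=
    gradient_eq (hasGradientAt_logGaussianKernel_right x)
  have hmean := integral_gradient_log_tilted_eq_neg hP hp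
    (fun y => (hasGradientAt_logGaussianKernel_right x y).differentiableAt)
    (integrable_exp_logGaussianKernel x) hscore
    (by rw [hgrad]; exact (integrable_tilted_logGaussianKernel x).smul (-μ))
  rw [hmean, hgrad, integral_smul, neg_smul, neg_neg, inv_smul_smul₀ hμ]
  exact hfisher

end GaussianSmoothing

/-- Lemma `computing-score`: two representations of the score of the
Gaussian perturbation `p_{μ,σ}` (the density of `μY + σZ`) as conditional expectations
under the tilted measure `P̃_{μ,σ}(·|x)`. -/
theorem statement16 :
    ∀ (d : ℕ) (μ σ : ℝ) (P : Measure (Vec d)),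
      IsProbabilityMeasure P → μ ≠ 0 → 0 < σ →
      -- (1) `∇log p_{μ,σ}(x) = E_{y∼P̃}[(μy − x)/σ²]`
      (∀ x : Vec d,
        gradient (fun z => Real.log (perturbDensity' d P μ σ z)) x =
          ∫ y, (σ ^ 2)⁻¹ • (μ • y - x) ∂(tiltMeasure d P μ σ x)) ∧
      -- (2) if `P` has a `C¹` density `p` with the integration by parts justified, then
      -- `∇log p_{μ,σ}(x) = (1/μ)·E_{y∼P̃}[∇log p(y)]`
      (∀ p : Vec d → ℝ,
        P = MeasureTheory.volume.withDensity (fun y => ENNReal.ofReal (p y)) →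
        ContDiff ℝ 1 p →
        (∀ x : Vec d, Integrable
          (fun y => Real.exp (-‖x - μ • y‖ ^ 2 / (2 * σ ^ 2)) • gradient p y)
          MeasureTheory.volume) →
        (∀ x : Vec d, Integrable (fun y => scoreOf p y) (tiltMeasure d P μ σ x)) →
        ∀ x : Vec d,
          gradient (fun z => Real.log (perturbDensity' d P μ σ z)) x =
            μ⁻¹ • ∫ y, scoreOf p y ∂(tiltMeasure d P μ σ x)) := by
  intro d μ σ P _ hμ hσ
  simp only [← gaussianSmoothing_euclideanSpace, tiltMeasure_eq_tilted]
  exact ⟨fun x => (statement16_general P hσ.ne' μ x).1.gradient,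
    fun p hP hp _ hscore x => ((statement16_general P hσ.ne' μ x).2 volume p hμ hP
      (hp.differentiable one_ne_zero) (hscore x)).gradient⟩

end DiffusionKL
end
end
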